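/- arXiv:math/0408258 — 5 statements merged into one kernel-verified Lean document; each statement's English description precedes it below -/
import Mathlib

section
/- Let (A, ρ) be a pre-Lie coalgebra over a commutative ring R and let (U, θ) be a left comodule over (A, ρ). Define a right action of A* on U by u·f = Σ_i ⟨u'_i, f⟩ u''_i for θ(u) = Σ_i u'_i ⊗ u''_i, and let [f, g] = f ⋆_ρ g − g ⋆_ρ f be the Lie bracket on A* induced by ρ. Then u·[f, g] = (u·f)·g − (u·g)·f for all u ∈ U and f, g ∈ A*; i.e., this is a right Lie algebra action of A* on U. -/
open scoped TensorProduct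

/-- `ρ̃ = (id ⊗ ρ)ρ − (ρ ⊗ id)ρ : A → A ⊗ A ⊗ A`. -/
noncomputable def tilde {R A : Type*} [CommRing R] [AddCommGroup A] [Module R A]
    (ρ : A →ₗ[R] A ⊗[R] A) : A →ₗ[R] A ⊗[R] (A ⊗[R] A) :=
  LinearMap.lTensor A ρ ∘ₗ ρ -
    (TensorProduct.assoc R A A A).toLinearMap ∘ₗ LinearMap.rTensor A ρ ∘ₗ ρ

/-- `θ̃ = (id_A ⊗ θ)θ − (ρ ⊗ id_U)θ : U → A ⊗ A ⊗ U`. -/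
noncomputable def tildeComod {R A U : Type*} [CommRing R] [AddCommGroup A] [Module R A]
    [AddCommGroup U] [Module R U] (ρ : A →ₗ[R] A ⊗[R] A) (θ : U →ₗ[R] A ⊗[R] U) :
    U →ₗ[R] A ⊗[R] (A ⊗[R] U) :=
  LinearMap.lTensor A θ ∘ₗ θ -
    (TensorProduct.assoc R A A U).toLinearMap ∘ₗ LinearMap.rTensor U ρ ∘ₗ θ

/-- The multiplication `⋆_ρ` on `A*`. -/
noncomputable def starDual {R A : Type*} [CommRing R] [AddCommGroup A] [Module R A]
    (ρ : A →ₗ[R] A ⊗[R] A) (f g : A →ₗ[R] R) : A →ₗ[R] R :=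
  (TensorProduct.lid R R).toLinearMap ∘ₗ TensorProduct.map f g ∘ₗ ρ

/-- The right action of `A*` on a comodule `(U, θ)`: `u·f = Σ ⟨u', f⟩ u''` for
`θ(u) = Σ u' ⊗ u''`. -/
noncomputable def act {R A U : Type*} [CommRing R] [AddCommGroup A] [Module R A]
    [AddCommGroup U] [Module R U] (θ : U →ₗ[R] A ⊗[R] U) (f : A →ₗ[R] R) : U →ₗ[R] U :=
  (TensorProduct.lid R U).toLinearMap ∘ₗ LinearMap.rTensor U f ∘ₗ θ

/-! Contract the first two tensor factors of `θ̃` with `f` and then `g`: the result is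
`(u·f)·g − u·(f ⋆ g)`. Invariance of `θ̃` under `P^{1,2}` makes this symmetric in `f` and `g`, which
is the claimed identity after rearrangement. -/

section Contraction

variable {R M N P Q : Type*} [CommSemiring R] [AddCommMonoid M] [AddCommMonoid N]
  [AddCommMonoid P] [AddCommMonoid Q] [Module R M] [Module R N] [Module R P] [Module R Q]

/-- Contraction of the first tensor factor with a linear form, `m ⊗ p ↦ f m • p`. The action
`act θ f` is `contractFst f ∘ₗ θ`, and iterating it contracts `M ⊗ (N ⊗ P)` from the left. -/
noncomputable def contractFst (f : M →ₗ[R] R) : M ⊗[R] P →ₗ[R] P :=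
  (TensorProduct.lid R P).toLinearMap ∘ₗ LinearMap.rTensor P f

@[simp]
theorem contractFst_tmul (f : M →ₗ[R] R) (m : M) (p : P) :
    contractFst f (m ⊗ₜ[R] p) = f m • p := by
  simp [contractFst]

theorem contractFst_lTensor (f : M →ₗ[R] R) (φ : P →ₗ[R] Q) (x : M ⊗[R] P) :
    contractFst f (LinearMap.lTensor M φ x) = φ (contractFst f x) := by
  induction x with
  | zero => simp
  | tmul m p => simp
  | add x y hx hy => simp only [map_add, hx, hy]

theorem contractFst_rTensor (f : N →ₗ[R] R) (φ : M →ₗ[R] N) (x : M ⊗[R] P) :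
    contractFst f (LinearMap.rTensor P φ x) = contractFst (f ∘ₗ φ) x := by
  simp only [contractFst, LinearMap.comp_apply, LinearMap.rTensor_comp]

theorem contractFst_contractFst_leftComm (f : N →ₗ[R] R) (g : M →ₗ[R] R)
    (x : M ⊗[R] (N ⊗[R] P)) :
    contractFst g (contractFst f (TensorProduct.leftComm R M N P x)) =
      contractFst f (contractFst g x) := by
  suffices contractFst g ∘ₗ contractFst f ∘ₗ (TensorProduct.leftComm R M N P).toLinearMap =
      contractFst f ∘ₗ contractFst g from LinearMap.congr_fun this x
  ext m n p
  simp [smul_comm (f n) (g m)]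

theorem contractFst_contractFst_assoc (f : M →ₗ[R] R) (g : N →ₗ[R] R)
    (x : (M ⊗[R] N) ⊗[R] P) :
    contractFst g (contractFst f (TensorProduct.assoc R M N P x)) =
      contractFst ((TensorProduct.lid R R).toLinearMap ∘ₗ TensorProduct.map f g) x := by
  suffices contractFst g ∘ₗ contractFst f ∘ₗ (TensorProduct.assoc R M N P).toLinearMap =
      contractFst ((TensorProduct.lid R R).toLinearMap ∘ₗ TensorProduct.map f g) from
    LinearMap.congr_fun this x
  ext m n p
  simp [mul_smul]

end Contraction

section Comodule

variable {R A U : Type*} [CommRing R] [AddCommGroup A] [Module R A] [AddCommGroup U] [Module R U]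

theorem act_apply (θ : U →ₗ[R] A ⊗[R] U) (f : A →ₗ[R] R) (u : U) :
    act θ f u = contractFst f (θ u) :=
  rfl

theorem act_sub (θ : U →ₗ[R] A ⊗[R] U) (f g : A →ₗ[R] R) :
    act θ (f - g) = act θ f - act θ g := by
  simp only [act, LinearMap.rTensor_sub, LinearMap.sub_comp, LinearMap.comp_sub]

theorem contractFst_contractFst_tildeComod (ρ : A →ₗ[R] A ⊗[R] A) (θ : U →ₗ[R] A ⊗[R] U)
    (f g : A →ₗ[R] R) (u : U) :
    contractFst g (contractFst f (tildeComod ρ θ u)) =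
      act θ g (act θ f u) - act θ (starDual ρ f g) u := by
  simp only [tildeComod, LinearMap.sub_apply, LinearMap.comp_apply, LinearEquiv.coe_coe, map_sub,
    contractFst_lTensor, contractFst_contractFst_assoc, contractFst_rTensor, act_apply, starDual,
    LinearMap.comp_assoc]

theorem stmt_3_general (ρ : A →ₗ[R] A ⊗[R] A) (θ : U →ₗ[R] A ⊗[R] U)
    (hθ : (TensorProduct.leftComm R A A U).toLinearMap ∘ₗ tildeComod ρ θ = tildeComod ρ θ)
    (u : U) (f g : A →ₗ[R] R) :
    act θ (starDual ρ f g - starDual ρ g f) u =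
      act θ g (act θ f u) - act θ f (act θ g u) := by
  have contract_symm : contractFst g (contractFst f (tildeComod ρ θ u)) =
      contractFst f (contractFst g (tildeComod ρ θ u)) := by
    rw [← contractFst_contractFst_leftComm f g]
    exact congrArg (fun x => contractFst g (contractFst f x)) (LinearMap.congr_fun hθ u).symm
  rw [contractFst_contractFst_tildeComod, contractFst_contractFst_tildeComod,
    sub_eq_sub_iff_sub_eq_sub] at contract_symm
  rw [act_sub, LinearMap.sub_apply, contract_symm]

end Comodule

/-- for a comodule `(U, θ)` over a pre-Lie coalgebra `(A, ρ)`, the action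
`u·f` satisfies `u·[f,g] = (u·f)·g − (u·g)·f`, i.e. it is a right Lie algebra action. -/
theorem stmt_3 {R A U : Type*} [CommRing R] [AddCommGroup A] [Module R A]
    [AddCommGroup U] [Module R U]
    (ρ : A →ₗ[R] A ⊗[R] A)
    (hρ : (TensorProduct.leftComm R A A A).toLinearMap ∘ₗ tilde ρ = tilde ρ)
    (θ : U →ₗ[R] A ⊗[R] U)
    (hθ : (TensorProduct.leftComm R A A U).toLinearMap ∘ₗ tildeComod ρ θ = tildeComod ρ θ) :
    ∀ (u : U) (f g : A →ₗ[R] R),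
      act θ (starDual ρ f g - starDual ρ g f) u =
        act θ g (act θ f u) - act θ f (act θ g u) :=
  stmt_3_general ρ θ hθ
end

section
/- Let T = ⊕_{m≥0} T^m be a graded associative unital algebra over a commutative ring R with 1 ∈ T^0 and T^m T^n ⊆ T^{m+n}, and let Δ : T → T ⊗ T be a coassociative algebra comultiplication (Δ(1) = 1⊗1 and Δ(ab) = Δ(a)Δ(b)). Assume Δ is left-handed, i.e. Δ(a) − a⊗1 − 1⊗a ∈ T_+ ⊗ T^1 for every a ∈ T^1, where T_+ = ⊕_{m≥1} T^m, and assume T^1 generates T_+ as an algebra. Let π : T → T^1 be the projection and define ρ = (π ⊗ π) ∘ Δ restricted to T^1. Then ρ : T^1 → T^1 ⊗ T^1 is a pre-Lie comultiplication, i.e. P^{1,2} ρ̃ = ρ̃ where ρ̃ = (id ⊗ ρ)ρ − (ρ ⊗ id)ρ. -/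
open scoped TensorProduct

/-!
Write `P` for the non-unital subalgebra generated by `A = T^1` and `ρ` for the leading term of `Δ`.
The map `L = (π ⊗ π)Δ - ρπ : T → A ⊗ A` measures the failure of `π` to intertwine `Δ` and `ρ`, and
coassociativity alone gives `ρ̃ = (L ⊗ π)Δ - (π ⊗ L)Δ` on `A`. By left-handedness, `Δ` maps `A` into
`(R1 + P) ⊗ (R1 + A)`; since `L` vanishes on `1` and on `A`, the second term is zero, and it remains
to see that `L` takes symmetric values on `P = A + P P`. This holds on products because
`Δ(xy) = Δ(x)Δ(y)` contributes `x ⊗ y + y ⊗ x` modulo terms with a factor in `P P`, which `π` kills.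
-/

section TensorProductOfSubmodules

variable {R : Type*} [CommSemiring R]

/-- The image of `U ⊗ V` in `M ⊗ N`, which need not be isomorphic to `U ⊗ V` over a general ring. -/
abbrev tensorSpan {M N : Type*} [AddCommMonoid M] [AddCommMonoid N] [Module R M] [Module R N]
    (U : Submodule R M) (V : Submodule R N) : Submodule R (M ⊗[R] N) :=
  Submodule.map₂ (TensorProduct.mk R M N) U V

theorem map_apply_eq_map_apply_of_mem {M N M' N' : Type*}
    [AddCommMonoid M] [AddCommMonoid N] [AddCommMonoid M'] [AddCommMonoid N']
    [Module R M] [Module R N] [Module R M'] [Module R N']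
    {U : Submodule R M} {V : Submodule R N} {f f' : M →ₗ[R] M'} {g g' : N →ₗ[R] N'}
    (hf : U ≤ LinearMap.eqLocus f f') (hg : V ≤ LinearMap.eqLocus g g')
    {t : M ⊗[R] N} (ht : t ∈ tensorSpan U V) :
    TensorProduct.map f g t = TensorProduct.map f' g' t := by
  suffices tensorSpan U V ≤
      LinearMap.eqLocus (TensorProduct.map f g) (TensorProduct.map f' g') from this ht
  exact Submodule.map₂_le.2 fun u hu v hv => congrArg₂ (· ⊗ₜ[R] ·) (hf hu) (hg hv)

theorem tensorSpan_mul_tensorSpan_le {S T : Type*} [Semiring S] [Semiring T]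
    [Algebra R S] [Algebra R T] (U U' : Submodule R S) (V V' : Submodule R T) :
    tensorSpan U V * tensorSpan U' V' ≤ tensorSpan (U * U') (V * V') := by
  suffices h : ∀ u ∈ U, ∀ v ∈ V, tensorSpan U' V' ≤
      (tensorSpan (U * U') (V * V')).comap (LinearMap.mulLeft R (u ⊗ₜ[R] v)) by
    refine Submodule.mul_le.2 fun s hs t ht => ?_
    suffices tensorSpan U V ≤
        (tensorSpan (U * U') (V * V')).comap (LinearMap.mulRight R t) from this hs
    exact Submodule.map₂_le.2 fun u hu v hv => h u hu v hv ht
  refine fun u hu v hv => Submodule.map₂_le.2 fun u' hu' v' hv' => ?_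
  simpa using Submodule.apply_mem_map₂ (TensorProduct.mk R S T)
    (Submodule.mul_mem_mul hu hu') (Submodule.mul_mem_mul hv hv')

theorem leftComm_assoc_apply {M N Q : Type*} [AddCommMonoid M] [AddCommMonoid N] [AddCommMonoid Q]
    [Module R M] [Module R N] [Module R Q] (t : (M ⊗[R] N) ⊗[R] Q) :
    TensorProduct.leftComm R M N Q (TensorProduct.assoc R M N Q t) =
      TensorProduct.assoc R N M Q
        (LinearMap.rTensor Q (TensorProduct.comm R M N).toLinearMap t) := by
  simp only [TensorProduct.leftComm_def, LinearEquiv.trans_apply, LinearEquiv.symm_apply_apply]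
  rfl

end TensorProductOfSubmodules

section TensorProductOfDifferences

variable {R M N M' N' : Type*} [CommRing R] [AddCommGroup M] [AddCommGroup N] [AddCommGroup M']
  [AddCommGroup N'] [Module R M] [Module R N] [Module R M'] [Module R N']

theorem tensorMap_sub_left (f f' : M →ₗ[R] M') (g : N →ₗ[R] N') :
    TensorProduct.map (f - f') g = TensorProduct.map f g - TensorProduct.map f' g :=
  TensorProduct.ext' fun _ _ => TensorProduct.sub_tmul _ _ _

theorem tensorMap_sub_right (f : M →ₗ[R] M') (g g' : N →ₗ[R] N') :
    TensorProduct.map f (g - g') = TensorProduct.map f g - TensorProduct.map f g' :=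
  TensorProduct.ext' fun _ _ => TensorProduct.tmul_sub _ _ _

end TensorProductOfDifferences

section GeneratedSubalgebra

variable {R T : Type*} [CommSemiring R] [Semiring T] [Algebra R T] {A P : Submodule R T}

theorem adjoin_toSubmodule_le_of_mul_le (hAP : A ≤ P) (hP : P * P ≤ P) :
    (NonUnitalAlgebra.adjoin R (A : Set T)).toSubmodule ≤ P :=
  NonUnitalAlgebra.adjoin_le
    (S := { P with mul_mem' := fun hx hy => hP (Submodule.mul_mem_mul hx hy) }) hAP

theorem adjoin_toSubmodule_mul_le (s : Set T) :
    (NonUnitalAlgebra.adjoin R s).toSubmodule * (NonUnitalAlgebra.adjoin R s).toSubmodule ≤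
      (NonUnitalAlgebra.adjoin R s).toSubmodule :=
  Submodule.mul_le.2 fun _ hx _ hy => (NonUnitalAlgebra.adjoin R s).mul_mem hx hy

theorem adjoin_toSubmodule_le_sup_mul (hAP : A ≤ P) (hP : P * P ≤ P) :
    (NonUnitalAlgebra.adjoin R (A : Set T)).toSubmodule ≤ A ⊔ P * P := by
  have hsup : A ⊔ P * P ≤ P := sup_le hAP hP
  exact adjoin_toSubmodule_le_of_mul_le le_sup_left
    ((mul_le_mul' hsup hsup).trans le_sup_right)

end GeneratedSubalgebra

section ReducedComultiplication

variable {R T : Type*} [CommRing R] [Ring T] [Algebra R T]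

/-- The reduced comultiplication `a ↦ Δ(a) - a ⊗ 1 - 1 ⊗ a`, meant for elements of an
augmentation ideal but defined on all of `T`; its value at `1` is `-(1 ⊗ 1)`. -/
noncomputable def reducedComul (Δ : T →ₐ[R] T ⊗[R] T) : T →ₗ[R] T ⊗[R] T :=
  Δ.toLinearMap - (TensorProduct.mk R T T).flip 1 - TensorProduct.mk R T T 1

variable {Δ : T →ₐ[R] T ⊗[R] T}

theorem reducedComul_apply (x : T) : reducedComul Δ x = Δ x - x ⊗ₜ[R] 1 - 1 ⊗ₜ[R] x := rfl

theorem comul_eq_add_reducedComul (x : T) :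
    Δ x = x ⊗ₜ[R] 1 + 1 ⊗ₜ[R] x + reducedComul Δ x := by
  rw [reducedComul_apply]; abel

theorem reducedComul_mul (x y : T) :
    reducedComul Δ (x * y) = x ⊗ₜ[R] y + y ⊗ₜ[R] x +
      ((x ⊗ₜ[R] 1 + 1 ⊗ₜ[R] x) * reducedComul Δ y + reducedComul Δ x * (y ⊗ₜ[R] 1 + 1 ⊗ₜ[R] y) +
        reducedComul Δ x * reducedComul Δ y) := by
  rw [reducedComul_apply, map_mul, comul_eq_add_reducedComul x, comul_eq_add_reducedComul y]
  simp only [add_mul, mul_add, Algebra.TensorProduct.tmul_mul_tmul, one_mul, mul_one]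
  abel

variable {P : Submodule R T}

theorem tmul_one_add_one_tmul_mem {x : T} (hx : x ∈ P) :
    x ⊗ₜ[R] 1 + 1 ⊗ₜ[R] x ∈ tensorSpan P 1 ⊔ tensorSpan 1 P :=
  Submodule.add_mem_sup
    (Submodule.apply_mem_map₂ (TensorProduct.mk R T T) hx (Submodule.one_le.1 le_rfl))
    (Submodule.apply_mem_map₂ (TensorProduct.mk R T T) (Submodule.one_le.1 le_rfl) hx)

theorem reducedComul_mul_sub_mem (hP : P * P ≤ P) {x y : T} (hx : x ∈ P) (hy : y ∈ P)
    (hΔx : reducedComul Δ x ∈ tensorSpan P P) (hΔy : reducedComul Δ y ∈ tensorSpan P P) :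
    reducedComul Δ (x * y) - (x ⊗ₜ[R] y + y ⊗ₜ[R] x) ∈
      tensorSpan (P * P) P ⊔ tensorSpan P (P * P) := by
  have left : (tensorSpan P 1 ⊔ tensorSpan 1 P) * tensorSpan P P ≤
      tensorSpan (P * P) P ⊔ tensorSpan P (P * P) := by
    rw [Submodule.sup_mul]
    exact sup_le_sup ((tensorSpan_mul_tensorSpan_le P P 1 P).trans_eq (by rw [one_mul]))
      ((tensorSpan_mul_tensorSpan_le 1 P P P).trans_eq (by rw [one_mul]))
  have right : tensorSpan P P * (tensorSpan P 1 ⊔ tensorSpan 1 P) ≤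
      tensorSpan (P * P) P ⊔ tensorSpan P (P * P) := by
    rw [Submodule.mul_sup]
    exact sup_le_sup ((tensorSpan_mul_tensorSpan_le P P P 1).trans_eq (by rw [mul_one]))
      ((tensorSpan_mul_tensorSpan_le P 1 P P).trans_eq (by rw [mul_one]))
  have both : tensorSpan P P * tensorSpan P P ≤ tensorSpan (P * P) P ⊔ tensorSpan P (P * P) :=
    (tensorSpan_mul_tensorSpan_le P P P P).trans
      ((Submodule.map₂_le_map₂_right hP).trans le_sup_left)
  rw [reducedComul_mul, add_sub_cancel_left]
  exact add_mem (add_mem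
    (left (Submodule.mul_mem_mul (tmul_one_add_one_tmul_mem hx) hΔy))
    (right (Submodule.mul_mem_mul hΔx (tmul_one_add_one_tmul_mem hy))))
    (both (Submodule.mul_mem_mul hΔx hΔy))

theorem reducedComul_mul_mem (hP : P * P ≤ P) {x y : T} (hx : x ∈ P) (hy : y ∈ P)
    (hΔx : reducedComul Δ x ∈ tensorSpan P P) (hΔy : reducedComul Δ y ∈ tensorSpan P P) :
    reducedComul Δ (x * y) ∈ tensorSpan P P := by
  have hle : tensorSpan (P * P) P ⊔ tensorSpan P (P * P) ≤ tensorSpan P P :=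
    sup_le (Submodule.map₂_le_map₂_left hP) (Submodule.map₂_le_map₂_right hP)
  refine (Submodule.sub_mem_iff_left _ ?_).1 (hle (reducedComul_mul_sub_mem hP hx hy hΔx hΔy))
  exact add_mem (Submodule.apply_mem_map₂ _ hx hy) (Submodule.apply_mem_map₂ _ hy hx)

theorem adjoin_le_comap_reducedComul {A : Submodule R T} (hAP : A ≤ P) (hP : P * P ≤ P)
    (hA : ∀ a ∈ A, reducedComul Δ a ∈ tensorSpan P P) :
    (NonUnitalAlgebra.adjoin R (A : Set T)).toSubmodule ≤
      (tensorSpan P P).comap (reducedComul Δ) := by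
  suffices (NonUnitalAlgebra.adjoin R (A : Set T)).toSubmodule ≤
      P ⊓ (tensorSpan P P).comap (reducedComul Δ) from this.trans inf_le_right
  refine adjoin_toSubmodule_le_of_mul_le (le_inf hAP hA) (Submodule.mul_le.2 ?_)
  rintro x ⟨hx, hΔx⟩ y ⟨hy, hΔy⟩
  exact ⟨hP (Submodule.mul_mem_mul hx hy), reducedComul_mul_mem hP hx hy hΔx hΔy⟩

theorem map_comul_mul {M : Type*} [AddCommGroup M] [Module R M] {π : T →ₗ[R] M} (hπ1 : π 1 = 0)
    (hP : P * P ≤ P) (hπP : P * P ≤ LinearMap.ker π) {x y : T} (hx : x ∈ P) (hy : y ∈ P)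
    (hΔx : reducedComul Δ x ∈ tensorSpan P P) (hΔy : reducedComul Δ y ∈ tensorSpan P P) :
    TensorProduct.map π π (Δ (x * y)) = π x ⊗ₜ[R] π y + π y ⊗ₜ[R] π x := by
  have hker : tensorSpan (P * P) P ⊔ tensorSpan P (P * P) ≤
      LinearMap.ker (TensorProduct.map π π) := by
    refine sup_le (Submodule.map₂_le.2 fun u hu v _ => ?_) (Submodule.map₂_le.2 fun u _ v hv => ?_)
    · simp [LinearMap.mem_ker.1 (hπP hu)]
    · simp [LinearMap.mem_ker.1 (hπP hv)]
  have hΔxy := hker (reducedComul_mul_sub_mem hP hx hy hΔx hΔy)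
  rw [LinearMap.mem_ker, map_sub, sub_eq_zero] at hΔxy
  rw [comul_eq_add_reducedComul, map_add, hΔxy]
  simp [hπ1]

theorem comul_mem_of_reducedComul_mem {A : Submodule R T} {a : T} (ha : a ∈ A) (haP : a ∈ P)
    (hΔ : reducedComul Δ a ∈ tensorSpan P A) : Δ a ∈ tensorSpan (1 ⊔ P) (1 ⊔ A) := by
  have one_mem (U : Submodule R T) : (1 : T) ∈ 1 ⊔ U := Submodule.one_le.1 le_sup_left
  rw [comul_eq_add_reducedComul]
  exact add_mem (add_mem
    (Submodule.apply_mem_map₂ _ (Submodule.mem_sup_right haP) (one_mem A))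
    (Submodule.apply_mem_map₂ _ (one_mem P) (Submodule.mem_sup_right ha)))
    (Submodule.map₂_le_map₂ le_sup_right le_sup_right hΔ)

end ReducedComultiplication

section LeadingTerm

variable {R T : Type*} [CommRing R]

section Linear

variable [AddCommGroup T] [Module R T] {A : Submodule R T}

/-- The leading term `ρ = (π ⊗ π) ∘ Δ|_A` of a comultiplication, for a map `π : T → A`. -/
noncomputable def leadingTerm (Δ : T →ₗ[R] T ⊗[R] T) (π : T →ₗ[R] A) : A →ₗ[R] A ⊗[R] A :=
  TensorProduct.map π π ∘ₗ Δ ∘ₗ A.subtype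

/-- The failure `(π ⊗ π)Δ - ρπ` of `π` to intertwine `Δ` with its leading term `ρ`. -/
noncomputable def leadingTermDefect (Δ : T →ₗ[R] T ⊗[R] T) (π : T →ₗ[R] A) :
    T →ₗ[R] A ⊗[R] A :=
  TensorProduct.map π π ∘ₗ Δ - leadingTerm Δ π ∘ₗ π

variable {Δ : T →ₗ[R] T ⊗[R] T} {π : T →ₗ[R] A}

theorem leadingTermDefect_apply (x : T) :
    leadingTermDefect Δ π x = TensorProduct.map π π (Δ x) - leadingTerm Δ π (π x) := rfl

theorem leadingTermDefect_apply_of_mem_ker {x : T} (hx : x ∈ LinearMap.ker π) :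
    leadingTermDefect Δ π x = TensorProduct.map π π (Δ x) := by
  rw [leadingTermDefect_apply, LinearMap.mem_ker.1 hx, map_zero, sub_zero]

theorem le_ker_leadingTermDefect (hπA : ∀ a : A, π a = a) :
    A ≤ LinearMap.ker (leadingTermDefect Δ π) := fun a ha => by
  rw [LinearMap.mem_ker, leadingTermDefect_apply, hπA ⟨a, ha⟩]
  exact sub_self _

theorem tilde_leadingTerm_apply
    (hcoassoc : (TensorProduct.assoc R T T T).toLinearMap ∘ₗ LinearMap.rTensor T Δ ∘ₗ Δ =
      LinearMap.lTensor T Δ ∘ₗ Δ) (a : A) :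
    tilde (leadingTerm Δ π) a =
      TensorProduct.assoc R A A A (TensorProduct.map (leadingTermDefect Δ π) π (Δ a)) -
        TensorProduct.map π (leadingTermDefect Δ π) (Δ a) := by
  set ρ := leadingTerm Δ π
  have hρa : ρ a = TensorProduct.map π π (Δ a) := rfl
  have coassoc_projected :
      TensorProduct.assoc R A A A (TensorProduct.map (TensorProduct.map π π ∘ₗ Δ) π (Δ a)) =
        TensorProduct.map π (TensorProduct.map π π ∘ₗ Δ) (Δ a) := by
    have h := congrArg (TensorProduct.map π (TensorProduct.map π π))
      (LinearMap.congr_fun hcoassoc a)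
    simpa [TensorProduct.map_map_assoc, LinearMap.rTensor, LinearMap.lTensor,
      TensorProduct.map_map] using h
  have left : TensorProduct.map (leadingTermDefect Δ π) π (Δ a) =
      TensorProduct.map (TensorProduct.map π π ∘ₗ Δ) π (Δ a) - LinearMap.rTensor A ρ (ρ a) := by
    rw [hρa, LinearMap.rTensor_map, leadingTermDefect, tensorMap_sub_left]; rfl
  have right : TensorProduct.map π (leadingTermDefect Δ π) (Δ a) =
      TensorProduct.map π (TensorProduct.map π π ∘ₗ Δ) (Δ a) - LinearMap.lTensor A ρ (ρ a) := by
    rw [hρa, LinearMap.lTensor_map, leadingTermDefect, tensorMap_sub_right]; rfl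
  rw [left, right, map_sub, coassoc_projected, sub_sub_sub_cancel_left]
  rfl

theorem leftComm_tilde_leadingTerm_apply
    (hcoassoc : (TensorProduct.assoc R T T T).toLinearMap ∘ₗ LinearMap.rTensor T Δ ∘ₗ Δ =
      LinearMap.lTensor T Δ ∘ₗ Δ) {U V : Submodule R T}
    (hU : U ≤ LinearMap.eqLocus
      ((TensorProduct.comm R A A).toLinearMap ∘ₗ leadingTermDefect Δ π) (leadingTermDefect Δ π))
    (hV : V ≤ LinearMap.ker (leadingTermDefect Δ π)) {a : A} (ha : Δ a ∈ tensorSpan U V) :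
    TensorProduct.leftComm R A A A (tilde (leadingTerm Δ π) a) = tilde (leadingTerm Δ π) a := by
  have right_vanishes : TensorProduct.map π (leadingTermDefect Δ π) (Δ a) = 0 := by
    rw [map_apply_eq_map_apply_of_mem (f' := π) (g' := 0) (fun _ _ => rfl) hV ha]
    simp
  have left_symmetric : LinearMap.rTensor A (TensorProduct.comm R A A).toLinearMap
      (TensorProduct.map (leadingTermDefect Δ π) π (Δ a)) =
        TensorProduct.map (leadingTermDefect Δ π) π (Δ a) := by
    rw [LinearMap.rTensor_map]
    exact map_apply_eq_map_apply_of_mem hU (fun _ _ => rfl) ha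
  rw [tilde_leadingTerm_apply hcoassoc, right_vanishes, sub_zero, leftComm_assoc_apply,
    left_symmetric]

end Linear

section Algebra

variable [Ring T] [Algebra R T] {A : Submodule R T} {Δ : T →ₐ[R] T ⊗[R] T} {π : T →ₗ[R] A}

theorem leadingTermDefect_one (hπ1 : π 1 = 0) : leadingTermDefect Δ.toLinearMap π 1 = 0 := by
  simp [leadingTermDefect_apply_of_mem_ker (LinearMap.mem_ker.2 hπ1),
    Algebra.TensorProduct.one_def, hπ1]

theorem comm_leadingTermDefect_mul {P : Submodule R T} (hπ1 : π 1 = 0)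
    (hP : P * P ≤ P) (hπP : P * P ≤ LinearMap.ker π) {x y : T} (hx : x ∈ P) (hy : y ∈ P)
    (hΔx : reducedComul Δ x ∈ tensorSpan P P) (hΔy : reducedComul Δ y ∈ tensorSpan P P) :
    TensorProduct.comm R A A (leadingTermDefect Δ.toLinearMap π (x * y)) =
      leadingTermDefect Δ.toLinearMap π (x * y) := by
  rw [leadingTermDefect_apply_of_mem_ker (hπP (Submodule.mul_mem_mul hx hy)),
    AlgHom.toLinearMap_apply, map_comul_mul hπ1 hP hπP hx hy hΔx hΔy]
  simp [add_comm]

end Algebra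

end LeadingTerm

theorem stmt_4_general {R T : Type*} [CommRing R] [Ring T] [Algebra R T] {A P : Submodule R T}
    {Δ : T →ₐ[R] T ⊗[R] T} {π : T →ₗ[R] A}
    (hcoassoc :
      (TensorProduct.assoc R T T T).toLinearMap ∘ₗ
          LinearMap.rTensor T Δ.toLinearMap ∘ₗ Δ.toLinearMap =
        LinearMap.lTensor T Δ.toLinearMap ∘ₗ Δ.toLinearMap)
    (hPA : P = (NonUnitalAlgebra.adjoin R (A : Set T)).toSubmodule)
    (hleft : ∀ a ∈ A, reducedComul Δ a ∈ tensorSpan P A)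
    (hπ1 : π 1 = 0) (hπA : ∀ a : A, π a = a) (hπP : P * P ≤ LinearMap.ker π) :
    (TensorProduct.leftComm R A A A).toLinearMap ∘ₗ tilde (leadingTerm Δ.toLinearMap π) =
      tilde (leadingTerm Δ.toLinearMap π) := by
  have hAP : A ≤ P := hPA ▸ NonUnitalAlgebra.subset_adjoin R
  have hP : P * P ≤ P := by rw [hPA]; exact adjoin_toSubmodule_mul_le _
  have hΔP : P ≤ (tensorSpan P P).comap (reducedComul Δ) := hPA.trans_le <|
    adjoin_le_comap_reducedComul hAP hP fun a ha => Submodule.map₂_le_map₂_right hAP (hleft a ha)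
  let L := leadingTermDefect Δ.toLinearMap π
  let S := LinearMap.eqLocus ((TensorProduct.comm R A A).toLinearMap ∘ₗ L) L
  have hA : 1 ⊔ A ≤ LinearMap.ker L :=
    sup_le (Submodule.one_le.2 (leadingTermDefect_one hπ1)) (le_ker_leadingTermDefect hπA)
  have hAS : 1 ⊔ A ≤ S := hA.trans fun x hx => by simp [S, LinearMap.mem_ker.1 hx]
  have hPPS : P * P ≤ S := Submodule.mul_le.2 fun x hx y hy =>
    comm_leadingTermDefect_mul hπ1 hP hπP hx hy (hΔP hx) (hΔP hy)
  have hPS : 1 ⊔ P ≤ S := calc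
    1 ⊔ P ≤ 1 ⊔ (A ⊔ P * P) :=
      sup_le_sup_left (hPA.trans_le (adjoin_toSubmodule_le_sup_mul hAP hP)) 1
    _ = 1 ⊔ A ⊔ P * P := (sup_assoc 1 A (P * P)).symm
    _ ≤ S := sup_le hAS hPPS
  ext1 a
  exact leftComm_tilde_leadingTerm_apply hcoassoc hPS hA
    (comul_mem_of_reducedComul_mem a.2 (hAP a.2) (hleft a a.2))

section Grading

variable {R T : Type*} [CommSemiring R] [Semiring T] [Algebra R T] (𝒜 : ℕ → Submodule R T)

/-- The span of the homogeneous components of degree at least `k`; for `k = 1` it is the `T_+` of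
the graded algebra `T`. -/
def degreeGE (k : ℕ) : Submodule R T := ⨆ m, ⨆ _ : k ≤ m, 𝒜 m

theorem le_degreeGE {k m : ℕ} (h : k ≤ m) : 𝒜 m ≤ degreeGE 𝒜 k := le_iSup₂_of_le m h le_rfl

theorem degreeGE_antitone : Antitone (degreeGE 𝒜) := fun _ _ h =>
  iSup₂_le fun _ hm => le_degreeGE 𝒜 (h.trans hm)

theorem degreeGE_mul_le [SetLike.GradedMul 𝒜] (k l : ℕ) :
    degreeGE 𝒜 k * degreeGE 𝒜 l ≤ degreeGE 𝒜 (k + l) := by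
  simp only [degreeGE, Submodule.iSup_mul, Submodule.mul_iSup, iSup_le_iff]
  exact fun n hn m hm => Submodule.mul_le.2 fun x hx y hy =>
    le_degreeGE 𝒜 (Nat.add_le_add hm hn) (SetLike.GradedMul.mul_mem hx hy)

theorem degreeGE_le_ker_of_lt [DirectSum.Decomposition 𝒜] {i k : ℕ} (hik : i < k)
    {π : T →ₗ[R] 𝒜 i} (hπ : ∀ x, π x = DirectSum.decompose 𝒜 x i) :
    degreeGE 𝒜 k ≤ LinearMap.ker π :=
  iSup₂_le fun m hm x hx => LinearMap.mem_ker.2 <| Subtype.ext <| by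
    rw [hπ, DirectSum.decompose_of_mem_ne 𝒜 hx (hik.trans_le hm).ne', ZeroMemClass.coe_zero]

theorem degreeGE_one_eq_adjoin [SetLike.GradedMul 𝒜]
    (hgen : ∀ x ∈ degreeGE 𝒜 1, x ∈ NonUnitalAlgebra.adjoin R (𝒜 1 : Set T)) :
    degreeGE 𝒜 1 = (NonUnitalAlgebra.adjoin R (𝒜 1 : Set T)).toSubmodule :=
  le_antisymm hgen <| adjoin_toSubmodule_le_of_mul_le (le_degreeGE 𝒜 le_rfl) <|
    (degreeGE_mul_le 𝒜 1 1).trans (degreeGE_antitone 𝒜 one_le_two)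

end Grading

/-- let `T = ⊕ T^m` be a graded algebra with a coassociative algebra
comultiplication `Δ` that is left-handed, and suppose `T^1` generates
`T_+ = ⊕_{m≥1} T^m`.  Then the leading term `ρ = (π ⊗ π) ∘ Δ|_{T^1}` is a pre-Lie
comultiplication on `T^1`. -/
theorem stmt_4 {R T : Type*} [CommRing R] [Ring T] [Algebra R T]
    (𝒜 : ℕ → Submodule R T) [GradedAlgebra 𝒜]
    (Δ : T →ₐ[R] T ⊗[R] T)
    (hcoassoc :
      (TensorProduct.assoc R T T T).toLinearMap ∘ₗ
          LinearMap.rTensor T Δ.toLinearMap ∘ₗ Δ.toLinearMap =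
        LinearMap.lTensor T Δ.toLinearMap ∘ₗ Δ.toLinearMap)
    (Tplus : Submodule R T) (hTplus : Tplus = ⨆ m, ⨆ _ : 1 ≤ m, 𝒜 m)
    (hleft : ∀ a : ↥(𝒜 1),
      Δ (a : T) - (a : T) ⊗ₜ[R] (1 : T) - (1 : T) ⊗ₜ[R] (a : T) ∈
        LinearMap.range (TensorProduct.map Tplus.subtype (𝒜 1).subtype))
    (hgen : ∀ x ∈ Tplus, x ∈ NonUnitalAlgebra.adjoin R (𝒜 1 : Set T))
    (π : T →ₗ[R] ↥(𝒜 1)) (hπ : ∀ x : T, π x = DirectSum.decompose 𝒜 x 1)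
    (ρ : ↥(𝒜 1) →ₗ[R] ↥(𝒜 1) ⊗[R] ↥(𝒜 1))
    (hρ : ρ = TensorProduct.map π π ∘ₗ Δ.toLinearMap ∘ₗ (𝒜 1).subtype) :
    (TensorProduct.leftComm R ↥(𝒜 1) ↥(𝒜 1) ↥(𝒜 1)).toLinearMap ∘ₗ tilde ρ = tilde ρ := by
  subst hTplus hρ
  have hπ1 : π 1 = 0 := Subtype.ext <| by
    rw [hπ, DirectSum.decompose_of_mem_ne 𝒜 SetLike.GradedOne.one_mem zero_ne_one,
      ZeroMemClass.coe_zero]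
  have hπA (a : 𝒜 1) : π a = a := Subtype.ext <| by
    rw [hπ, DirectSum.decompose_of_mem_same 𝒜 a.2]
  refine stmt_4_general hcoassoc (degreeGE_one_eq_adjoin 𝒜 hgen) (fun a ha => ?_) hπ1 hπA
    ((degreeGE_mul_le 𝒜 1 1).trans (degreeGE_le_ker_of_lt 𝒜 one_lt_two hπ))
  exact (TensorProduct.range_mapIncl _ _).le (hleft ⟨a, ha⟩)
end

section
/- Let 𝒜 be an alphabet, let L be a stable set of nonempty words in 𝒜, and let V be the free R-module on the set of nonempty words in 𝒜. Define ρ_L : V → V ⊗ V on a word w of length m ≥ 1 by ρ_L(w) = Σ_{(i,j)≺w} w_{i,j} ⊗ w_{1,i} w_{j,m+1}, the sum over all simple cuts (i,j) of w. Then ρ_L is a pre-Lie comultiplication on V: P^{1,2} ρ̃_L = ρ̃_L, where ρ̃_L = (id ⊗ ρ_L)ρ_L − (ρ_L ⊗ id)ρ_L. -/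
open scoped TensorProduct Classical

/-- The free `R`-module on the set of nonempty words in the alphabet `𝒜`. -/
abbrev WordModule (R 𝒜 : Type*) [CommRing R] : Type _ :=
  {w : List 𝒜 // w ≠ []} →₀ R

/-- The basis vector of a nonempty word (and `0` on the empty word, which never occurs
in the formulas below). -/
noncomputable def wv (R : Type*) {𝒜 : Type*} [CommRing R] (w : List 𝒜) :
    WordModule R 𝒜 :=
  if h : w = [] then 0 else Finsupp.single ⟨w, h⟩ 1

/-- Stability of a set of nonempty words (0-based indices: the factor `w_{i,j}` of the
paper is `(w.drop i).take (j - i)`, and `w_{1,i} w_{j,m+1}` is `w.take i ++ w.drop j`). -/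
def IsStable {𝒜 : Type*} (L : Set (List 𝒜)) : Prop :=
  ∀ (w : List 𝒜) (i j : ℕ), i < j → j ≤ w.length → ¬(i = 0 ∧ j = w.length) →
    (w.drop i).take (j - i) ∈ L → (w ∈ L ↔ w.take i ++ w.drop j ∈ L)

/-- The simple cuts of a word `w`: pairs `(i, j)`, `0 ≤ i < j ≤ w.length`,
`(i,j) ≠ (0, w.length)`, whose factor belongs to `L`. -/
noncomputable def simpleCuts {𝒜 : Type*} (L : Set (List 𝒜)) (w : List 𝒜) :
    Finset (ℕ × ℕ) :=
  (Finset.range (w.length + 1) ×ˢ Finset.range (w.length + 1)).filter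
    (fun p => p.1 < p.2 ∧ ¬(p.1 = 0 ∧ p.2 = w.length) ∧
      (w.drop p.1).take (p.2 - p.1) ∈ L)

/-!
Every term of `(id ⊗ ρ)ρ` and `(ρ ⊗ id)ρ` at a word `w` is determined by two cuts of `w` itself. In
`(ρ ⊗ id)ρ` the second cut lies strictly inside the first one. In `(id ⊗ ρ)ρ` the second cut is made
in the word left after erasing a factor; it either avoids the seam, and then comes from a cut of `w`
separated from the first one by at least one letter, or it meets the seam, and then filling the
erased factor back in gives a cut of `w` strictly containing the first one, by stability. The nested
pairs cancel in `ρ̃`, and the sum over separated pairs is symmetric in the two cuts.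
-/

section Factors

variable {𝒜 : Type*} (w : List 𝒜) {p q : ℕ × ℕ}

/-- The factor `w_{i,j}` of `w`, for `p = (i, j)` in 0-based indices. -/
def factor (w : List 𝒜) (p : ℕ × ℕ) : List 𝒜 := (w.drop p.1).take (p.2 - p.1)

/-- The word `w_{1,i} w_{j,m+1}` left after erasing the factor at `p = (i, j)`. -/
def eraseFactor (w : List 𝒜) (p : ℕ × ℕ) : List 𝒜 := w.take p.1 ++ w.drop p.2

/-- The interval `p` is contained in the interval `q`. -/
def Inside (p q : ℕ × ℕ) : Prop := q.1 ≤ p.1 ∧ p.2 ≤ q.2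

/-- The interval `p` is strictly contained in the interval `q`. -/
def StrictlyInside (p q : ℕ × ℕ) : Prop := Inside p q ∧ p ≠ q

/-- There is at least one letter between the intervals `p` and `q`. -/
def Separated (p q : ℕ × ℕ) : Prop := p.2 < q.1 ∨ q.2 < p.1

/-- The interval `p`, contained in `q`, in the coordinates of the factor at `q`. -/
def relativeTo (q p : ℕ × ℕ) : ℕ × ℕ := (p.1 - q.1, p.2 - q.1)

/-- The trace of the interval `q` on the word left after erasing the factor at `p`: a position `n`
is sent to the number `min n p.1 + (n - p.2)` of remaining letters before it. -/
def contract (p q : ℕ × ℕ) : ℕ × ℕ :=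
  (min q.1 p.1 + (q.1 - p.2), min q.2 p.1 + (q.2 - p.2))

/-- The inverse of `contract p` on the intervals separated from `p` or strictly containing it: an
interval that meets the seam at `p.1`, even if only by an endpoint, is enlarged to contain `p`. -/
def expand (p q : ℕ × ℕ) : ℕ × ℕ :=
  (if q.1 ≤ p.1 then q.1 else q.1 + (p.2 - p.1), if q.2 < p.1 then q.2 else q.2 + (p.2 - p.1))

theorem Separated.symm (h : Separated p q) : Separated q p := Or.symm h

theorem Separated.le_or_le (h : Separated p q) : p.2 ≤ q.1 ∨ q.2 ≤ p.1 :=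
  Or.imp le_of_lt le_of_lt h

theorem StrictlyInside.not_separated (hp : p.1 < p.2) (h : StrictlyInside p q) :
    ¬ Separated p q := by
  unfold StrictlyInside Inside Separated at *
  omega

theorem length_factor (hp : p.2 ≤ w.length) : (factor w p).length = p.2 - p.1 := by
  simp only [factor, List.length_take, List.length_drop]
  omega

theorem length_eraseFactor (hp : p.1 ≤ p.2) (hpw : p.2 ≤ w.length) :
    (eraseFactor w p).length = w.length - (p.2 - p.1) := by
  simp only [eraseFactor, List.length_append, List.length_take, List.length_drop]
  omega

theorem getElem?_factor (n : ℕ) :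
    (factor w p)[n]? = if n < p.2 - p.1 then w[p.1 + n]? else none := by
  simp only [factor, List.getElem?_take, List.getElem?_drop]

theorem getElem?_eraseFactor (hp : p.1 ≤ p.2) (hpw : p.2 ≤ w.length) (n : ℕ) :
    (eraseFactor w p)[n]? = if n < p.1 then w[n]? else w[n + (p.2 - p.1)]? := by
  have hmin : min p.1 w.length = p.1 := by omega
  simp only [eraseFactor, List.getElem?_append, List.getElem?_take, List.getElem?_drop,
    List.length_take, hmin]
  split_ifs
  · rfl
  · congr 1
    omega

theorem factor_factor (h : Inside p q) :
    factor (factor w q) (relativeTo q p) = factor w p := by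
  obtain ⟨hleft, hright⟩ := h
  refine List.ext_getElem? fun n => ?_
  simp only [getElem?_factor, relativeTo]
  split_ifs <;> first | rfl | omega | (congr 1; omega)

theorem factor_eraseFactor_of_inside (hp : p.1 ≤ p.2) (hq : q.2 ≤ w.length)
    (h : Inside p q) :
    factor (eraseFactor w p) (contract p q) = eraseFactor (factor w q) (relativeTo q p) := by
  obtain ⟨hleft, hright⟩ := h
  refine List.ext_getElem? fun n => ?_
  rw [getElem?_eraseFactor (factor w q) (by simp only [relativeTo]; omega)
    (by rw [length_factor w hq]; simp only [relativeTo]; omega)]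
  simp only [getElem?_factor, getElem?_eraseFactor w hp (hright.trans hq), relativeTo, contract]
  split_ifs <;> first | rfl | omega | (congr 1; omega)

theorem eraseFactor_eraseFactor_of_inside (hp : p.1 ≤ p.2) (hq : q.2 ≤ w.length)
    (h : Inside p q) :
    eraseFactor (eraseFactor w p) (contract p q) = eraseFactor w q := by
  obtain ⟨hleft, hright⟩ := h
  have hpw : p.2 ≤ w.length := hright.trans hq
  refine List.ext_getElem? fun n => ?_
  rw [getElem?_eraseFactor (eraseFactor w p) (by simp only [contract]; omega)
      (by rw [length_eraseFactor w hp hpw]; simp only [contract]; omega),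
    getElem?_eraseFactor w (by omega) hq]
  simp only [getElem?_eraseFactor w hp hpw, contract]
  split_ifs <;> first | rfl | omega | (congr 1; omega)

theorem factor_eraseFactor_of_disjoint (hp : p.1 ≤ p.2) (hpw : p.2 ≤ w.length)
    (h : p.2 ≤ q.1 ∨ q.2 ≤ p.1) :
    factor (eraseFactor w p) (contract p q) = factor w q := by
  refine List.ext_getElem? fun n => ?_
  simp only [getElem?_factor, getElem?_eraseFactor w hp hpw, contract]
  split_ifs <;> first | rfl | omega | (congr 1; omega)

theorem eraseFactor_eraseFactor_comm (hp : p.1 ≤ p.2) (hpw : p.2 ≤ w.length)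
    (hq : q.1 ≤ q.2) (hqw : q.2 ≤ w.length) :
    eraseFactor (eraseFactor w p) (contract p q) =
      eraseFactor (eraseFactor w q) (contract q p) := by
  refine List.ext_getElem? fun n => ?_
  rw [getElem?_eraseFactor (eraseFactor w p) (by simp only [contract]; omega)
      (by rw [length_eraseFactor w hp hpw]; simp only [contract]; omega),
    getElem?_eraseFactor (eraseFactor w q) (by simp only [contract]; omega)
      (by rw [length_eraseFactor w hq hqw]; simp only [contract]; omega)]
  simp only [getElem?_eraseFactor w hp hpw, getElem?_eraseFactor w hq hqw, contract]
  split_ifs <;> first | rfl | omega | (congr 1; omega)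

theorem expand_fst_lt_snd (hq : q.1 < q.2) : (expand p q).1 < (expand p q).2 := by
  simp only [expand]
  split_ifs <;> omega

theorem contract_expand (hp : p.1 < p.2) : contract p (expand p q) = q := by
  ext <;> simp only [contract, expand] <;> split_ifs <;> omega

theorem expand_contract (hp : p.1 < p.2) (hq : q.1 < q.2)
    (h : Separated p q ∨ StrictlyInside p q) : expand p (contract p q) = q := by
  unfold Separated StrictlyInside Inside at h
  ext <;> grind [contract, expand]

theorem separated_or_strictlyInside_expand (hp : p.1 < p.2) (hq : q.1 < q.2) :
    Separated p (expand p q) ∨ StrictlyInside p (expand p q) := by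
  simp only [Separated, StrictlyInside, Inside, expand, ne_eq, Prod.ext_iff]
  split_ifs <;> omega

end Factors

section SimpleCuts

variable {𝒜 : Type*} {L : Set (List 𝒜)} {w : List 𝒜} {p q : ℕ × ℕ}

theorem mem_simpleCuts :
    p ∈ simpleCuts L w ↔
      p.1 < p.2 ∧ p.2 ≤ w.length ∧ ¬(p.1 = 0 ∧ p.2 = w.length) ∧ factor w p ∈ L := by
  simp only [simpleCuts, Finset.mem_filter, Finset.mem_product, Finset.mem_range, factor]
  constructor
  · rintro ⟨⟨-, hpw⟩, hp, hproper, hmem⟩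
    exact ⟨hp, by omega, hproper, hmem⟩
  · rintro ⟨hp, hpw, hproper, hmem⟩
    exact ⟨⟨by omega, by omega⟩, hp, hproper, hmem⟩

theorem simpleCuts_nil : simpleCuts L [] = ∅ := by
  refine Finset.eq_empty_of_forall_notMem fun p hp => ?_
  obtain ⟨hlt, hle, -⟩ := mem_simpleCuts.1 hp
  rw [List.length_nil] at hle
  omega

theorem relativeTo_mem_simpleCuts_iff (hp : p.1 < p.2) (hq : q ∈ simpleCuts L w)
    (h : StrictlyInside p q) :
    relativeTo q p ∈ simpleCuts L (factor w q) ↔ p ∈ simpleCuts L w := by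
  obtain ⟨-, hqw, hproper, -⟩ := mem_simpleCuts.1 hq
  rw [mem_simpleCuts, mem_simpleCuts, length_factor w hqw, factor_factor w h.1]
  simp only [StrictlyInside, Inside, ne_eq, Prod.ext_iff] at h
  simp only [relativeTo]
  grind

theorem IsStable.factor_eraseFactor_mem_iff (hL : IsStable L) (hp : p.1 < p.2)
    (hq : q.2 ≤ w.length) (h : StrictlyInside p q) (hmem : factor w p ∈ L) :
    factor (eraseFactor w p) (contract p q) ∈ L ↔ factor w q ∈ L := by
  rw [factor_eraseFactor_of_inside w hp.le hq h.1]
  have hinner : factor (factor w q) (relativeTo q p) ∈ L := by rwa [factor_factor w h.1]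
  simp only [StrictlyInside, Inside, ne_eq, Prod.ext_iff] at h
  refine (hL (factor w q) (p.1 - q.1) (p.2 - q.1) ?_ ?_ ?_ hinner).symm
  · omega
  · rw [length_factor w hq]
    omega
  · rw [length_factor w hq]
    omega

theorem IsStable.contract_mem_simpleCuts_iff (hL : IsStable L) (hp : p ∈ simpleCuts L w)
    (hq : q.1 < q.2) (h : Separated p q ∨ StrictlyInside p q) :
    contract p q ∈ simpleCuts L (eraseFactor w p) ↔ q ∈ simpleCuts L w := by
  obtain ⟨hlt, hpw, -, hpL⟩ := mem_simpleCuts.1 hp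
  have hmem (hqw : q.2 ≤ w.length) :
      factor (eraseFactor w p) (contract p q) ∈ L ↔ factor w q ∈ L := by
    rcases h with hsep | hins
    · rw [factor_eraseFactor_of_disjoint w hlt.le hpw hsep.le_or_le]
    · exact hL.factor_eraseFactor_mem_iff hlt hqw hins hpL
  rw [mem_simpleCuts, mem_simpleCuts, length_eraseFactor w hlt.le hpw]
  simp only [Separated, StrictlyInside, Inside, ne_eq, Prod.ext_iff] at h
  have hlength : (contract p q).2 ≤ w.length - (p.2 - p.1) ↔ q.2 ≤ w.length := by
    simp only [contract]
    omega
  rw [hlength]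
  refine and_congr (by simp only [contract]; omega) (and_congr_right fun hqw => ?_)
  exact and_congr (by simp only [contract]; omega) (hmem hqw)

variable {M : Type*} [AddCommMonoid M]

theorem sum_simpleCuts_factor (hq : q ∈ simpleCuts L w) (g : ℕ × ℕ → M) :
    ∑ r ∈ simpleCuts L (factor w q), g r =
      ∑ p ∈ simpleCuts L w with StrictlyInside p q, g (relativeTo q p) := by
  have hshift (r : ℕ × ℕ) : relativeTo q (q.1 + r.1, q.1 + r.2) = r := by
    simp only [relativeTo, Nat.add_sub_cancel_left]
  refine Finset.sum_nbij' (fun r => (q.1 + r.1, q.1 + r.2)) (relativeTo q) ?_ ?_ ?_ ?_ ?_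
  · intro r hr
    obtain ⟨hlt, hle, hproper, -⟩ := mem_simpleCuts.1 hr
    rw [length_factor w (mem_simpleCuts.1 hq).2.1] at hle hproper
    have hins : StrictlyInside (q.1 + r.1, q.1 + r.2) q := by
      simp only [StrictlyInside, Inside, ne_eq, Prod.ext_iff]
      omega
    refine Finset.mem_filter.2 ⟨?_, hins⟩
    rwa [← relativeTo_mem_simpleCuts_iff (by simpa using hlt) hq hins, hshift]
  · intro p hp
    obtain ⟨hp, hins⟩ := Finset.mem_filter.1 hp
    exact (relativeTo_mem_simpleCuts_iff (mem_simpleCuts.1 hp).1 hq hins).2 hp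
  · exact fun r _ => hshift r
  · intro p hp
    obtain ⟨hp, ⟨hleft, -⟩, -⟩ := Finset.mem_filter.1 hp
    have hlt := (mem_simpleCuts.1 hp).1
    ext <;> simp only [relativeTo] <;> omega
  · exact fun r _ => by rw [hshift]

theorem IsStable.sum_simpleCuts_eraseFactor (hL : IsStable L) (hp : p ∈ simpleCuts L w)
    (g : ℕ × ℕ → M) :
    ∑ r ∈ simpleCuts L (eraseFactor w p), g r =
      ∑ q ∈ simpleCuts L w with Separated p q ∨ StrictlyInside p q, g (contract p q) := by
  have hlt := (mem_simpleCuts.1 hp).1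
  refine Finset.sum_nbij' (expand p) (contract p) ?_ ?_ ?_ ?_ ?_
  · intro r hr
    have hr_lt := (mem_simpleCuts.1 hr).1
    have hpos := separated_or_strictlyInside_expand hlt hr_lt
    refine Finset.mem_filter.2 ⟨?_, hpos⟩
    rwa [← hL.contract_mem_simpleCuts_iff hp (expand_fst_lt_snd hr_lt) hpos,
      contract_expand hlt]
  · intro q hq
    obtain ⟨hq, hpos⟩ := Finset.mem_filter.1 hq
    exact (hL.contract_mem_simpleCuts_iff hp (mem_simpleCuts.1 hq).1 hpos).2 hq
  · exact fun r _ => contract_expand hlt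
  · intro q hq
    obtain ⟨hq, hpos⟩ := Finset.mem_filter.1 hq
    exact expand_contract hlt (mem_simpleCuts.1 hq).1 hpos
  · exact fun r _ => by rw [contract_expand hlt]

theorem sum_factor_factor (f : List 𝒜 → List 𝒜 → List 𝒜 → M) :
    ∑ q ∈ simpleCuts L w, ∑ r ∈ simpleCuts L (factor w q),
        f (factor (factor w q) r) (eraseFactor (factor w q) r) (eraseFactor w q) =
      ∑ q ∈ simpleCuts L w, ∑ p ∈ simpleCuts L w with StrictlyInside p q,
        f (factor w p) (eraseFactor (factor w q) (relativeTo q p)) (eraseFactor w q) := by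
  refine Finset.sum_congr rfl fun q hq => ?_
  rw [sum_simpleCuts_factor hq]
  refine Finset.sum_congr rfl fun p hp => ?_
  rw [factor_factor w (Finset.mem_filter.1 hp).2.1]

theorem IsStable.sum_factor_eraseFactor (hL : IsStable L) (hp : p ∈ simpleCuts L w)
    (f : List 𝒜 → List 𝒜 → M) :
    ∑ r ∈ simpleCuts L (eraseFactor w p),
        f (factor (eraseFactor w p) r) (eraseFactor (eraseFactor w p) r) =
      ∑ q ∈ simpleCuts L w with Separated p q,
          f (factor w q) (eraseFactor (eraseFactor w p) (contract p q)) +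
        ∑ q ∈ simpleCuts L w with StrictlyInside p q,
          f (eraseFactor (factor w q) (relativeTo q p)) (eraseFactor w q) := by
  obtain ⟨hlt, hpw, -⟩ := mem_simpleCuts.1 hp
  have hdisj : Disjoint {q ∈ simpleCuts L w | Separated p q}
      {q ∈ simpleCuts L w | StrictlyInside p q} :=
    Finset.disjoint_filter.2 fun q _ hsep hins => hins.not_separated hlt hsep
  rw [hL.sum_simpleCuts_eraseFactor hp, Finset.filter_or, Finset.sum_union hdisj]
  congr 1
  · refine Finset.sum_congr rfl fun q hq => ?_
    have hsep := (Finset.mem_filter.1 hq).2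
    rw [factor_eraseFactor_of_disjoint w hlt.le hpw hsep.le_or_le]
  · refine Finset.sum_congr rfl fun q hq => ?_
    obtain ⟨hq, hins, -⟩ := Finset.mem_filter.1 hq
    have hqw := (mem_simpleCuts.1 hq).2.1
    rw [factor_eraseFactor_of_inside w hlt.le hqw hins,
      eraseFactor_eraseFactor_of_inside w hlt.le hqw hins]

theorem sum_separated_comm (f : List 𝒜 → List 𝒜 → List 𝒜 → M) :
    ∑ p ∈ simpleCuts L w, ∑ q ∈ simpleCuts L w with Separated p q,
        f (factor w q) (factor w p) (eraseFactor (eraseFactor w p) (contract p q)) =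
      ∑ p ∈ simpleCuts L w, ∑ q ∈ simpleCuts L w with Separated p q,
        f (factor w p) (factor w q) (eraseFactor (eraseFactor w p) (contract p q)) := by
  rw [Finset.sum_comm' (t' := simpleCuts L w)
    (s' := fun q => {p ∈ simpleCuts L w | Separated q p}) fun p q => ?_]
  · refine Finset.sum_congr rfl fun q hq => Finset.sum_congr rfl fun p hp => ?_
    obtain ⟨hp_lt, hpw, -⟩ := mem_simpleCuts.1 (Finset.mem_filter.1 hp).1
    obtain ⟨hq_lt, hqw, -⟩ := mem_simpleCuts.1 hq
    rw [eraseFactor_eraseFactor_comm w hq_lt.le hqw hp_lt.le hpw]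
  · simp only [Finset.mem_filter]
    exact ⟨fun ⟨hp, hq, h⟩ => ⟨⟨hp, h.symm⟩, hq⟩, fun ⟨⟨hp, h⟩, hq⟩ => ⟨hp, hq, h.symm⟩⟩

end SimpleCuts

section Comultiplication

variable {R 𝒜 : Type*} [CommRing R] {L : Set (List 𝒜)}
  {ρ : WordModule R 𝒜 →ₗ[R] WordModule R 𝒜 ⊗[R] WordModule R 𝒜}

/-- The linear map `ρ` is the comultiplication `ρ_L` by simple cuts. The empty word is included: its
vector `wv R []` is `0` and it has no cuts. -/
def IsCutComul (L : Set (List 𝒜))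
    (ρ : WordModule R 𝒜 →ₗ[R] WordModule R 𝒜 ⊗[R] WordModule R 𝒜) : Prop :=
  ∀ w : List 𝒜, ρ (wv R w) =
    ∑ p ∈ simpleCuts L w, wv R (factor w p) ⊗ₜ[R] wv R (eraseFactor w p)

theorem wv_of_ne_nil {w : List 𝒜} (hw : w ≠ []) : wv R w = Finsupp.single ⟨w, hw⟩ 1 :=
  dif_neg hw

theorem isCutComul_of_forall_single
    (hρ : ∀ (w : List 𝒜) (hw : w ≠ []), ρ (Finsupp.single ⟨w, hw⟩ 1) =
      ∑ p ∈ simpleCuts L w, wv R (factor w p) ⊗ₜ[R] wv R (eraseFactor w p)) :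
    IsCutComul L ρ := by
  intro w
  rcases eq_or_ne w [] with rfl | hw
  · rw [simpleCuts_nil, Finset.sum_empty, wv, dif_pos rfl, map_zero]
  · rw [wv_of_ne_nil hw, hρ w hw]

theorem IsCutComul.lTensor_comul (hρ : IsCutComul L ρ) (w : List 𝒜) :
    LinearMap.lTensor (WordModule R 𝒜) ρ (ρ (wv R w)) =
      ∑ p ∈ simpleCuts L w, ∑ r ∈ simpleCuts L (eraseFactor w p),
        wv R (factor w p) ⊗ₜ[R] (wv R (factor (eraseFactor w p) r) ⊗ₜ[R]
          wv R (eraseFactor (eraseFactor w p) r)) := by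
  simp only [hρ _, map_sum, LinearMap.lTensor_tmul, TensorProduct.tmul_sum]

theorem IsCutComul.assoc_rTensor_comul (hρ : IsCutComul L ρ) (w : List 𝒜) :
    TensorProduct.assoc R (WordModule R 𝒜) (WordModule R 𝒜) (WordModule R 𝒜)
        (LinearMap.rTensor (WordModule R 𝒜) ρ (ρ (wv R w))) =
      ∑ q ∈ simpleCuts L w, ∑ r ∈ simpleCuts L (factor w q),
        wv R (factor (factor w q) r) ⊗ₜ[R] (wv R (eraseFactor (factor w q) r) ⊗ₜ[R]
          wv R (eraseFactor w q)) := by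
  simp only [hρ _, map_sum, LinearMap.rTensor_tmul, TensorProduct.sum_tmul,
    TensorProduct.assoc_tmul]

theorem IsCutComul.tilde_wv (hρ : IsCutComul L ρ) (hL : IsStable L) (w : List 𝒜) :
    tilde ρ (wv R w) =
      ∑ p ∈ simpleCuts L w, ∑ q ∈ simpleCuts L w with Separated p q,
        wv R (factor w p) ⊗ₜ[R] (wv R (factor w q) ⊗ₜ[R]
          wv R (eraseFactor (eraseFactor w p) (contract p q))) := by
  let f (a b c : List 𝒜) := wv R a ⊗ₜ[R] (wv R b ⊗ₜ[R] wv R c)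
  have hnested : ∑ q ∈ simpleCuts L w, ∑ p ∈ simpleCuts L w with StrictlyInside p q,
        f (factor w p) (eraseFactor (factor w q) (relativeTo q p)) (eraseFactor w q) =
      ∑ p ∈ simpleCuts L w, ∑ q ∈ simpleCuts L w with StrictlyInside p q,
        f (factor w p) (eraseFactor (factor w q) (relativeTo q p)) (eraseFactor w q) :=
    Finset.sum_comm' fun q p => by simp only [Finset.mem_filter]; tauto
  have htilde : tilde ρ (wv R w) = LinearMap.lTensor (WordModule R 𝒜) ρ (ρ (wv R w)) -
      TensorProduct.assoc R (WordModule R 𝒜) (WordModule R 𝒜) (WordModule R 𝒜)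
        (LinearMap.rTensor (WordModule R 𝒜) ρ (ρ (wv R w))) := rfl
  rw [htilde, hρ.lTensor_comul, hρ.assoc_rTensor_comul, sum_factor_factor f, hnested,
    sub_eq_iff_eq_add, ← Finset.sum_add_distrib]
  exact Finset.sum_congr rfl fun p hp => hL.sum_factor_eraseFactor hp (f (factor w p))

end Comultiplication

/-- for a stable set `L` of nonempty words, the comultiplication
`ρ_L(w) = Σ_{(i,j)≺w} w_{i,j} ⊗ w_{1,i} w_{j,m+1}` is pre-Lie: `P^{1,2} ρ̃_L = ρ̃_L`. -/
theorem stmt_7 {R 𝒜 : Type*} [CommRing R]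
    (L : Set (List 𝒜)) (hL0 : ∀ w ∈ L, w ≠ []) (hL : IsStable L)
    (ρ : WordModule R 𝒜 →ₗ[R] WordModule R 𝒜 ⊗[R] WordModule R 𝒜)
    (hρ : ∀ (w : List 𝒜) (hw : w ≠ []),
      ρ (Finsupp.single ⟨w, hw⟩ 1) =
        ∑ p ∈ simpleCuts L w,
          wv R ((w.drop p.1).take (p.2 - p.1)) ⊗ₜ[R] wv R (w.take p.1 ++ w.drop p.2)) :
    (TensorProduct.leftComm R (WordModule R 𝒜) (WordModule R 𝒜)
        (WordModule R 𝒜)).toLinearMap ∘ₗ tilde ρ = tilde ρ := by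
  have hcomul : IsCutComul L ρ := isCutComul_of_forall_single hρ
  refine Finsupp.lhom_ext' fun ⟨w, hw⟩ => LinearMap.ext_ring ?_
  simp only [LinearMap.comp_apply, Finsupp.lsingle_apply, LinearEquiv.coe_coe]
  rw [← wv_of_ne_nil hw, hcomul.tilde_wv hL]
  simp only [map_sum, TensorProduct.leftComm_tmul]
  exact sum_separated_comm fun a b c => wv R a ⊗ₜ[R] (wv R b ⊗ₜ[R] wv R c)
end

section
/- Let 𝒜 be an alphabet, μ : 𝒜 × 𝒜 → R a map, and W the free R-module on the set of all words in 𝒜 (including the empty word). Define ρ_μ : W → W ⊗ W on a word w of length m by ρ_μ(w) = Σ_{a † w} μ(w|_a) · l_a(w) ⊗ r_a(w), the sum over all simple inscriptions a in w. Then ρ_μ is a pre-Lie comultiplication on W: P^{1,2} ρ̃_μ = ρ̃_μ, where ρ̃_μ = (id ⊗ ρ_μ)ρ_μ − (ρ_μ ⊗ id)ρ_μ. -/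
open scoped TensorProduct Classical

/-- The free `R`-module on the set of all words (including the empty word). -/
abbrev AllWordModule (R 𝒜 : Type*) [CommRing R] : Type _ := List 𝒜 →₀ R

/-- The coefficient `μ(w|_a) = μ(w(i), w(j))` (0-based positions; `0` out of range,
which never occurs in the formulas below). -/
def muCoeff {R 𝒜 : Type*} [CommRing R] (μ : 𝒜 → 𝒜 → R) (w : List 𝒜) (i j : ℕ) : R :=
  match w[i]?, w[j]? with
  | some a, some b => μ a b
  | _, _ => 0

/-- Simple inscriptions in a word `w`: pairs of positions `0 ≤ i < j < w.length`. -/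
def simpleInscriptions {𝒜 : Type*} (w : List 𝒜) : Finset (ℕ × ℕ) :=
  (Finset.range w.length ×ˢ Finset.range w.length).filter (fun p => p.1 < p.2)

/-!
Read a word off a finite set `S` of points of a linear order labelled by `f`. Passing to the inner
or the outer word of an inscription then amounts to passing to a subset of `S` with the same
labelling, so every iterated inscription is a pair of inscriptions `p`, `q` of the original `S`.
In `(id ⊗ ρ)ρ`, where `q` lives outside of `p`, either `q` surrounds `p` or `p` and `q` lie apart.
The surrounding pairs are exactly those of `(ρ ⊗ id)ρ`, with the same summand, so that `ρ̃` is the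
sum over the pairs lying apart, which is symmetric in `p` and `q`.
-/

section Points

variable {α : Type*} [LinearOrder α] {S : Finset α} {p q : α × α}

/-- The simple inscriptions in a finite set of points of a linear order, given by their end points
rather than by the positions of these in the increasing enumeration of `S`. -/
def inscriptionPairs (S : Finset α) : Finset (α × α) :=
  (S ×ˢ S).filter fun p => p.1 < p.2

/-- The points strictly between the end points of an inscription: the support of its inner word
`l_a`. -/
def insidePoints (S : Finset α) (p : α × α) : Finset α :=
  S.filter fun x => p.1 < x ∧ x < p.2

/-- The points before or after an inscription: the support of its outer word `r_a`. -/
def outsidePoints (S : Finset α) (p : α × α) : Finset α :=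
  S.filter fun x => x < p.1 ∨ p.2 < x

/-- One of the two inscriptions ends before the other begins. -/
def LiesApart (p q : α × α) : Prop :=
  p.2 < q.1 ∨ q.2 < p.1

theorem liesApart_comm : LiesApart p q ↔ LiesApart q p :=
  or_comm

theorem mem_inscriptionPairs : p ∈ inscriptionPairs S ↔ p.1 ∈ S ∧ p.2 ∈ S ∧ p.1 < p.2 := by
  simp only [inscriptionPairs, Finset.mem_filter, Finset.mem_product, and_assoc]

theorem mem_insidePoints {x : α} : x ∈ insidePoints S p ↔ x ∈ S ∧ p.1 < x ∧ x < p.2 :=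
  Finset.mem_filter

theorem mem_outsidePoints {x : α} : x ∈ outsidePoints S p ↔ x ∈ S ∧ (x < p.1 ∨ p.2 < x) :=
  Finset.mem_filter

theorem insidePoints_outsidePoints_comm (S : Finset α) (p q : α × α) :
    insidePoints (outsidePoints S p) q = outsidePoints (insidePoints S q) p :=
  Finset.filter_comm ..

theorem outsidePoints_outsidePoints_comm (S : Finset α) (p q : α × α) :
    outsidePoints (outsidePoints S p) q = outsidePoints (outsidePoints S q) p :=
  Finset.filter_comm ..

theorem insidePoints_insidePoints_of_mem (hp : p ∈ inscriptionPairs (insidePoints S q)) :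
    insidePoints (insidePoints S q) p = insidePoints S p := by
  ext x
  simp only [mem_inscriptionPairs, mem_insidePoints] at hp ⊢
  grind

theorem outsidePoints_outsidePoints_of_mem (hp : p ∈ inscriptionPairs (insidePoints S q)) :
    outsidePoints (outsidePoints S p) q = outsidePoints S q := by
  ext x
  simp only [mem_inscriptionPairs, mem_insidePoints, mem_outsidePoints] at hp ⊢
  grind

theorem outsidePoints_insidePoints_of_liesApart (h : LiesApart p q) :
    outsidePoints (insidePoints S q) p = insidePoints S q := by
  ext x
  simp only [LiesApart, mem_insidePoints, mem_outsidePoints] at h ⊢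
  grind

theorem mem_inscriptionPairs_of_mem_insidePoints (hp : p ∈ inscriptionPairs (insidePoints S q)) :
    p ∈ inscriptionPairs S := by
  simp only [mem_inscriptionPairs, mem_insidePoints] at hp ⊢
  grind

theorem not_liesApart_of_mem_insidePoints (hp : p ∈ inscriptionPairs (insidePoints S q)) :
    ¬ LiesApart p q := by
  simp only [LiesApart, mem_inscriptionPairs, mem_insidePoints] at hp ⊢
  grind

theorem mem_inscriptionPairs_outsidePoints (hp : p ∈ inscriptionPairs S) :
    q ∈ inscriptionPairs (outsidePoints S p) ↔
      q ∈ inscriptionPairs S ∧ (LiesApart p q ∨ p ∈ inscriptionPairs (insidePoints S q)) := by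
  simp only [LiesApart, mem_inscriptionPairs, mem_insidePoints, mem_outsidePoints] at hp ⊢
  grind

theorem sum_inscriptionPairs_outsidePoints {M : Type*} [AddCommMonoid M] (S : Finset α)
    (F : α × α → α × α → M) :
    ∑ p ∈ inscriptionPairs S, ∑ q ∈ inscriptionPairs (outsidePoints S p), F p q =
      (∑ p ∈ inscriptionPairs S, ∑ q ∈ inscriptionPairs S with LiesApart p q, F p q) +
        ∑ q ∈ inscriptionPairs S, ∑ p ∈ inscriptionPairs (insidePoints S q), F p q := by
  have surrounding :
      ∑ q ∈ inscriptionPairs S, ∑ p ∈ inscriptionPairs (insidePoints S q), F p q =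
        ∑ p ∈ inscriptionPairs S,
          ∑ q ∈ inscriptionPairs S with p ∈ inscriptionPairs (insidePoints S q), F p q :=
    Finset.sum_comm' fun q p => by
      grind [mem_inscriptionPairs_of_mem_insidePoints]
  rw [surrounding, ← Finset.sum_add_distrib]
  refine Finset.sum_congr rfl fun p hp => ?_
  rw [← Finset.sum_union]
  · refine Finset.sum_congr ?_ fun _ _ => rfl
    ext q
    rw [mem_inscriptionPairs_outsidePoints hp, ← Finset.filter_or, Finset.mem_filter]
  · exact Finset.disjoint_filter.2 fun q _ hpq hp => not_liesApart_of_mem_insidePoints hp hpq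

end Points

section Enumeration

variable {α : Type*} {i j : ℕ}

theorem take_append_drop_sublist (L : List α) (hij : i ≤ j) :
    (L.take i ++ L.drop j).Sublist L := by
  simpa only [List.take_append_drop] using
    (List.drop_sublist_drop_left L hij).append_left (L.take i)

variable [LinearOrder α] {S : Finset α}

theorem mem_simpleInscriptions {𝒜 : Type*} {w : List 𝒜} {p : ℕ × ℕ} :
    p ∈ simpleInscriptions w ↔ p.1 < p.2 ∧ p.2 < w.length := by
  simp only [simpleInscriptions, Finset.mem_filter, Finset.mem_product, Finset.mem_range]
  omega

theorem sort_insidePoints_getElem (hij : i < j) (hj : j < S.sort.length) :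
    (insidePoints S (S.sort[i], S.sort[j])).sort =
      (S.sort.drop (i + 1)).take (j - i - 1) := by
  have sorted := S.sortedLT_sort
  refine (Finset.sortedLT_sort _).eq_of_mem_iff
    (sorted.pairwise.sublist ((List.take_sublist _ _).trans (List.drop_sublist _ _))).sortedLT
    fun x => ?_
  rw [Finset.mem_sort, mem_insidePoints, ← Finset.mem_sort (· ≤ ·), List.mem_take_iff_getElem]
  constructor
  · rintro ⟨hx, hix, hxj⟩
    obtain ⟨k, hk, rfl⟩ := List.getElem_of_mem hx
    rw [sorted.getElem_lt_getElem_iff] at hix hxj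
    exact ⟨k - (i + 1), by rw [List.length_drop]; omega, by grind⟩
  · rintro ⟨k, hk, rfl⟩
    rw [List.length_drop] at hk
    simp only [List.getElem_drop, List.getElem_mem, sorted.getElem_lt_getElem_iff, true_and]
    omega

theorem sort_outsidePoints_getElem (hij : i < j) (hj : j < S.sort.length) :
    (outsidePoints S (S.sort[i], S.sort[j])).sort = S.sort.take i ++ S.sort.drop (j + 1) := by
  have sorted := S.sortedLT_sort
  refine (Finset.sortedLT_sort _).eq_of_mem_iff
    (sorted.pairwise.sublist (take_append_drop_sublist _ (by omega))).sortedLT fun x => ?_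
  rw [Finset.mem_sort, mem_outsidePoints, ← Finset.mem_sort (· ≤ ·), List.mem_append,
    List.mem_take_iff_getElem, List.mem_drop_iff_getElem]
  constructor
  · rintro ⟨hx, hxi | hjx⟩ <;> obtain ⟨k, hk, rfl⟩ := List.getElem_of_mem hx
    · rw [sorted.getElem_lt_getElem_iff] at hxi
      exact .inl ⟨k, by omega, rfl⟩
    · rw [sorted.getElem_lt_getElem_iff] at hjx
      exact .inr ⟨k - (j + 1), by omega, by grind⟩
  · rintro (⟨k, hk, rfl⟩ | ⟨k, hk, rfl⟩) <;>
      simp only [List.getElem_mem, sorted.getElem_lt_getElem_iff, true_and] <;> omega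

theorem sum_simpleInscriptions_sort {M : Type*} [AddCommMonoid M] (S : Finset α)
    (F : ℕ × ℕ → M) (G : α × α → M)
    (hFG : ∀ i j (hij : i < j) (hj : j < S.sort.length),
      F (i, j) = G (S.sort[i], S.sort[j])) :
    ∑ p ∈ simpleInscriptions S.sort, F p = ∑ p ∈ inscriptionPairs S, G p := by
  have sorted := S.sortedLT_sort
  refine Finset.sum_bij
    (fun p hp => (S.sort[p.1]'(by grind [mem_simpleInscriptions]),
      S.sort[p.2]'(by grind [mem_simpleInscriptions]))) ?_ ?_ ?_ ?_
  · rintro ⟨i, j⟩ hp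
    have hij := (mem_simpleInscriptions.1 hp).1
    simp only [mem_inscriptionPairs, ← Finset.mem_sort (· ≤ ·) (s := S), List.getElem_mem,
      sorted.getElem_lt_getElem_iff, true_and]
    exact hij
  · rintro ⟨i, j⟩ _ ⟨k, l⟩ _ h
    simpa only [Prod.mk.injEq, sorted.nodup.getElem_inj_iff] using h
  · rintro ⟨a, b⟩ hab
    obtain ⟨ha, hb, hlt⟩ := mem_inscriptionPairs.1 hab
    obtain ⟨i, hi, rfl⟩ := List.getElem_of_mem ((Finset.mem_sort (· ≤ ·)).2 ha)
    obtain ⟨j, hj, rfl⟩ := List.getElem_of_mem ((Finset.mem_sort (· ≤ ·)).2 hb)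
    rw [sorted.getElem_lt_getElem_iff] at hlt
    exact ⟨(i, j), mem_simpleInscriptions.2 ⟨hlt, hj⟩, rfl⟩
  · rintro ⟨i, j⟩ hp
    obtain ⟨hij, hj⟩ := mem_simpleInscriptions.1 hp
    exact hFG i j hij hj

end Enumeration

theorem tilde_apply_eq_of_lTensor_eq_add {R A : Type*} [CommRing R] [AddCommGroup A]
    [Module R A] {ρ : A →ₗ[R] A ⊗[R] A} {x : A} {y : A ⊗[R] (A ⊗[R] A)}
    (h : LinearMap.lTensor A ρ (ρ x) =
      y + TensorProduct.assoc R A A A (LinearMap.rTensor A ρ (ρ x))) :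
    tilde ρ x = y :=
  sub_eq_of_eq_add h

section ReadWord

variable {R 𝒜 α : Type*} [CommRing R]

theorem muCoeff_map (μ : 𝒜 → 𝒜 → R) (f : α → 𝒜) (L : List α) {i j : ℕ}
    (hi : i < L.length) (hj : j < L.length) : muCoeff μ (L.map f) i j = μ (f L[i]) (f L[j]) := by
  simp only [muCoeff, List.getElem?_map, List.getElem?_eq_getElem, hi, hj, Option.map_some]

variable [LinearOrder α]

/-- The word formed by the labels `f x` of the points `x ∈ S`, in increasing order of `x`. -/
def readWord (f : α → 𝒜) (S : Finset α) : List 𝒜 :=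
  S.sort.map f

theorem readWord_get_univ (w : List 𝒜) : readWord w.get Finset.univ = w := by
  have sort_univ : (Finset.univ : Finset (Fin w.length)).sort = List.finRange w.length :=
    (Finset.sortedLT_sort _).eq_of_mem_iff (List.sortedLT_finRange _) fun x => by simp
  rw [readWord, sort_univ, List.map_get_finRange]

variable (R) in
/-- The basis vector of the module of words given by `readWord f S`. -/
noncomputable def readVector (f : α → 𝒜) (S : Finset α) : AllWordModule R 𝒜 :=
  Finsupp.single (readWord f S) 1

/-- `ρ` is the comultiplication `ρ_μ` of the theorem. -/
def IsInscriptionComul (μ : 𝒜 → 𝒜 → R)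
    (ρ : AllWordModule R 𝒜 →ₗ[R] AllWordModule R 𝒜 ⊗[R] AllWordModule R 𝒜) : Prop :=
  ∀ w : List 𝒜,
    ρ (Finsupp.single w 1) =
      ∑ p ∈ simpleInscriptions w,
        muCoeff μ w p.1 p.2 •
          (Finsupp.single ((w.drop (p.1 + 1)).take (p.2 - p.1 - 1)) (1 : R) ⊗ₜ[R]
            Finsupp.single (w.take p.1 ++ w.drop (p.2 + 1)) (1 : R))

/-- The summand of `ρ̃_μ` at the pair of inscriptions `p`, `q` in `S`. The middle factor removes
from the inner word of `q` what belongs to `p`, which makes the formula valid both when `q`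
surrounds `p` and when they lie apart. -/
noncomputable def iteratedTerm (μ : 𝒜 → 𝒜 → R) (f : α → 𝒜) (S : Finset α) (p q : α × α) :
    AllWordModule R 𝒜 ⊗[R] (AllWordModule R 𝒜 ⊗[R] AllWordModule R 𝒜) :=
  (μ (f p.1) (f p.2) * μ (f q.1) (f q.2)) •
    (readVector R f (insidePoints S p) ⊗ₜ[R]
      (readVector R f (outsidePoints (insidePoints S q) p) ⊗ₜ[R]
        readVector R f (outsidePoints (outsidePoints S p) q)))

theorem leftComm_iteratedTerm_of_liesApart (μ : 𝒜 → 𝒜 → R) (f : α → 𝒜) (S : Finset α)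
    {p q : α × α} (h : LiesApart p q) :
    TensorProduct.leftComm R (AllWordModule R 𝒜) (AllWordModule R 𝒜) (AllWordModule R 𝒜)
      (iteratedTerm μ f S p q) = iteratedTerm μ f S q p := by
  simp only [iteratedTerm, map_smul, TensorProduct.leftComm_tmul,
    outsidePoints_insidePoints_of_liesApart h,
    outsidePoints_insidePoints_of_liesApart (liesApart_comm.1 h)]
  rw [outsidePoints_outsidePoints_comm, mul_comm]

namespace IsInscriptionComul

variable {μ : 𝒜 → 𝒜 → R}
  {ρ : AllWordModule R 𝒜 →ₗ[R] AllWordModule R 𝒜 ⊗[R] AllWordModule R 𝒜}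

theorem apply_readVector (hρ : IsInscriptionComul μ ρ) (f : α → 𝒜) (S : Finset α) :
    ρ (readVector R f S) =
      ∑ p ∈ inscriptionPairs S, μ (f p.1) (f p.2) •
        (readVector R f (insidePoints S p) ⊗ₜ[R] readVector R f (outsidePoints S p)) := by
  have inscriptions_map : simpleInscriptions (S.sort.map f) = simpleInscriptions S.sort := by
    simp only [simpleInscriptions, List.length_map]
  rw [readVector, readWord, hρ, inscriptions_map]
  refine sum_simpleInscriptions_sort S _ _ fun i j hij hj => ?_
  simp only [readVector, readWord, muCoeff_map μ f _ (hij.trans hj) hj,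
    sort_insidePoints_getElem hij hj, sort_outsidePoints_getElem hij hj, List.map_append,
    List.map_take, List.map_drop]

theorem lTensor_apply_readVector (hρ : IsInscriptionComul μ ρ) (f : α → 𝒜) (S : Finset α) :
    LinearMap.lTensor (AllWordModule R 𝒜) ρ (ρ (readVector R f S)) =
      ∑ p ∈ inscriptionPairs S, ∑ q ∈ inscriptionPairs (outsidePoints S p),
        iteratedTerm μ f S p q := by
  simp only [hρ.apply_readVector, map_sum, map_smul, LinearMap.lTensor_tmul,
    TensorProduct.tmul_sum, TensorProduct.tmul_smul, Finset.smul_sum, smul_smul,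
    insidePoints_outsidePoints_comm, iteratedTerm]

theorem assoc_rTensor_apply_readVector (hρ : IsInscriptionComul μ ρ) (f : α → 𝒜)
    (S : Finset α) :
    TensorProduct.assoc R (AllWordModule R 𝒜) (AllWordModule R 𝒜) (AllWordModule R 𝒜)
        (LinearMap.rTensor (AllWordModule R 𝒜) ρ (ρ (readVector R f S))) =
      ∑ q ∈ inscriptionPairs S, ∑ p ∈ inscriptionPairs (insidePoints S q),
        iteratedTerm μ f S p q := by
  simp only [hρ.apply_readVector, map_sum, map_smul, LinearMap.rTensor_tmul,
    TensorProduct.sum_tmul, ← TensorProduct.smul_tmul', TensorProduct.assoc_tmul,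
    Finset.smul_sum, smul_smul]
  refine Finset.sum_congr rfl fun q _ => Finset.sum_congr rfl fun p hp => ?_
  rw [iteratedTerm, insidePoints_insidePoints_of_mem hp, outsidePoints_outsidePoints_of_mem hp,
    mul_comm]

theorem tilde_apply_readVector (hρ : IsInscriptionComul μ ρ) (f : α → 𝒜) (S : Finset α) :
    tilde ρ (readVector R f S) =
      ∑ p ∈ inscriptionPairs S, ∑ q ∈ inscriptionPairs S with LiesApart p q,
        iteratedTerm μ f S p q := by
  apply tilde_apply_eq_of_lTensor_eq_add
  rw [hρ.lTensor_apply_readVector, hρ.assoc_rTensor_apply_readVector,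
    sum_inscriptionPairs_outsidePoints]

theorem leftComm_tilde_apply_readVector (hρ : IsInscriptionComul μ ρ) (f : α → 𝒜)
    (S : Finset α) :
    TensorProduct.leftComm R (AllWordModule R 𝒜) (AllWordModule R 𝒜) (AllWordModule R 𝒜)
      (tilde ρ (readVector R f S)) = tilde ρ (readVector R f S) := by
  rw [hρ.tilde_apply_readVector, map_sum]
  calc
    _ = ∑ p ∈ inscriptionPairs S, ∑ q ∈ inscriptionPairs S with LiesApart p q,
          iteratedTerm μ f S q p := by
      refine Finset.sum_congr rfl fun p _ => ?_
      rw [map_sum]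
      exact Finset.sum_congr rfl fun q hq =>
        leftComm_iteratedTerm_of_liesApart μ f S (Finset.mem_filter.1 hq).2
    _ = _ := Finset.sum_comm' fun p q => by
      simp only [Finset.mem_filter, liesApart_comm (p := p)]
      tauto

end IsInscriptionComul

end ReadWord

/-- for any map `μ : 𝒜 × 𝒜 → R`, the comultiplication
`ρ_μ(w) = Σ_{a † w} μ(w|_a) l_a(w) ⊗ r_a(w)` on the free module `W` on all words is
pre-Lie: `P^{1,2} ρ̃_μ = ρ̃_μ`. -/
theorem stmt_10 {R 𝒜 : Type*} [CommRing R] (μ : 𝒜 → 𝒜 → R)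
    (ρ : AllWordModule R 𝒜 →ₗ[R] AllWordModule R 𝒜 ⊗[R] AllWordModule R 𝒜)
    (hρ : ∀ w : List 𝒜,
      ρ (Finsupp.single w 1) =
        ∑ p ∈ simpleInscriptions w,
          muCoeff μ w p.1 p.2 •
            (Finsupp.single ((w.drop (p.1 + 1)).take (p.2 - p.1 - 1)) (1 : R) ⊗ₜ[R]
              Finsupp.single (w.take p.1 ++ w.drop (p.2 + 1)) (1 : R))) :
    (TensorProduct.leftComm R (AllWordModule R 𝒜) (AllWordModule R 𝒜)
        (AllWordModule R 𝒜)).toLinearMap ∘ₗ tilde ρ = tilde ρ := by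
  have hρ : IsInscriptionComul μ ρ := hρ
  refine Finsupp.lhom_ext' fun w => LinearMap.ext_ring ?_
  have h := hρ.leftComm_tilde_apply_readVector w.get Finset.univ
  rwa [readVector, readWord_get_univ] at h
end

section
/- Let 𝒜 be an alphabet, L a stable set of nonempty words, and V the free R-module on nonempty words. Define a bilinear operation ∘_L on V by: for words w = A_1…A_m and x = B_1…B_n (m, n ≥ 1), w ∘_L x = 0 if w ∉ L, and w ∘_L x = Σ_{i=0}^{n} B_1…B_i A_1…A_m B_{i+1}…B_n if w ∈ L. Then ∘_L is a pre-Lie multiplication on V, i.e. f ∘_L (g ∘_L h) − (f ∘_L g) ∘_L h = g ∘_L (f ∘_L h) − (g ∘_L f) ∘_L h for all f, g, h ∈ V. -/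
open scoped Classical

/-!
Write `D_w` for the operator inserting the word `w` at every position of a word. Stability of `L`
says that inserting `f ∈ L` into `g` does not change whether `g ∈ L`, so
`f ∘ (g ∘ h) - (f ∘ g) ∘ h` vanishes unless both `f` and `g` lie in `L`, and otherwise it is the
same expression with `∘` replaced by unrestricted insertion. Expand `D_f D_g h` according to where
`f` lands in the word obtained from `h` by inserting `g`. The positions inside `g`, its two ends
included, contribute exactly `(f ∘ g) ∘ h`. The positions strictly to the left or strictly to the
right of `g` contribute the insertions of `f` and `g` at two distinct positions of `h`, and this
sum is symmetric in `f` and `g`.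
-/

section Associator

variable {R M : Type*} [CommRing R] [AddCommGroup M] [Module R M]

/-- The trilinear map `(f, g, h) ↦ f ∘ (g ∘ h) - (f ∘ g) ∘ h` measuring the failure of a bilinear
operation to be associative; the operation is pre-Lie when this map is symmetric in `f` and `g`.
The sign is opposite to that of Mathlib's `associator`. -/
def associatorMap (circ : M →ₗ[R] M →ₗ[R] M) : M →ₗ[R] M →ₗ[R] M →ₗ[R] M :=
  (LinearMap.mul R (Module.End R M)).compl₁₂ circ circ - circ.compr₂ circ

theorem associatorMap_apply (circ : M →ₗ[R] M →ₗ[R] M) (f g h : M) :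
    associatorMap circ f g h = circ f (circ g h) - circ (circ f g) h :=
  rfl

theorem associatorMap_comm_of_basis {ι : Type*} (b : Module.Basis ι R M)
    {circ : M →ₗ[R] M →ₗ[R] M}
    (hb : ∀ i j k, associatorMap circ (b i) (b j) (b k) = associatorMap circ (b j) (b i) (b k))
    (f g h : M) : associatorMap circ f g h = associatorMap circ g f h := by
  have flip_eq : associatorMap circ = (associatorMap circ).flip :=
    b.ext fun i ↦ b.ext fun j ↦ b.ext fun k ↦ hb i j k
  exact DFunLike.congr_fun (DFunLike.congr_fun (DFunLike.congr_fun flip_eq f) g) h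

end Associator

section InsertAt

variable {𝒜 : Type*}

/-- The word obtained by inserting the word `w` into `x` after the first `i` letters of `x`
(at the end of `x` when `i` exceeds the length of `x`). -/
def insertAt (w x : List 𝒜) (i : ℕ) : List 𝒜 :=
  x.take i ++ w ++ x.drop i

theorem insertAt_append_length (w a b : List 𝒜) :
    insertAt w (a ++ b) a.length = a ++ w ++ b := by
  simp [insertAt]

theorem length_insertAt (w x : List 𝒜) (i : ℕ) :
    (insertAt w x i).length = x.length + w.length := by
  simp only [insertAt, List.length_append, List.length_take, List.length_drop]
  omega

theorem insertAt_ne_nil {w : List 𝒜} (hw : w ≠ []) (x : List 𝒜) (i : ℕ) :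
    insertAt w x i ≠ [] := by
  simp [insertAt, hw]

theorem exists_eq_append_of_le_length {x : List 𝒜} {i : ℕ} (hi : i ≤ x.length) :
    ∃ a b, x = a ++ b ∧ i = a.length :=
  ⟨x.take i, x.drop i, (x.take_append_drop i).symm, (List.length_take_of_le hi).symm⟩

theorem insertAt_insertAt_add {g h : List 𝒜} {i k : ℕ} (f : List 𝒜) (hi : i ≤ h.length)
    (hk : k ≤ g.length) :
    insertAt f (insertAt g h i) (i + k) = insertAt (insertAt f g k) h i := by
  obtain ⟨a, b, rfl, rfl⟩ := exists_eq_append_of_le_length hi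
  obtain ⟨c, d, rfl, rfl⟩ := exists_eq_append_of_le_length hk
  calc insertAt f (insertAt (c ++ d) (a ++ b) a.length) (a.length + c.length)
      = insertAt f ((a ++ c) ++ (d ++ b)) (a ++ c).length := by
        simp only [insertAt_append_length, List.append_assoc, List.length_append]
    _ = a ++ (c ++ f ++ d) ++ b := by
        rw [insertAt_append_length]
        simp only [List.append_assoc]
    _ = insertAt (insertAt f (c ++ d) c.length) (a ++ b) a.length := by
        rw [insertAt_append_length, insertAt_append_length]

theorem insertAt_insertAt_comm {h : List 𝒜} {i j : ℕ} (f g : List 𝒜) (hij : i ≤ j)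
    (hj : j ≤ h.length) :
    insertAt f (insertAt g h i) (j + g.length) = insertAt g (insertAt f h j) i := by
  obtain ⟨a, b, rfl, rfl⟩ := exists_eq_append_of_le_length hj
  obtain ⟨c, d, rfl, rfl⟩ := exists_eq_append_of_le_length hij
  calc insertAt f (insertAt g (c ++ d ++ b) c.length) ((c ++ d).length + g.length)
      = insertAt f ((c ++ g ++ d) ++ b) (c ++ g ++ d).length := by
        rw [List.append_assoc c d b, insertAt_append_length]
        simp only [List.append_assoc, List.length_append]
        congr 1
        omega
    _ = insertAt g (c ++ (d ++ f ++ b)) c.length := by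
        rw [insertAt_append_length, insertAt_append_length]
        simp only [List.append_assoc]
    _ = insertAt g (insertAt f (c ++ d ++ b) (c ++ d).length) c.length := by
        rw [insertAt_append_length f]
        simp only [List.append_assoc]

theorem IsStable.append_append_mem_iff {L : Set (List 𝒜)} (hL : IsStable L) {a w b : List 𝒜}
    (hw : w ∈ L) (hw0 : w ≠ []) (hab : a ++ b ≠ []) : a ++ w ++ b ∈ L ↔ a ++ b ∈ L := by
  have w_pos : 0 < w.length := List.length_pos_iff.2 hw0
  have ab_pos : 0 < a.length + b.length := List.length_append ▸ List.length_pos_iff.2 hab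
  have factor_eq : ((a ++ w ++ b).drop a.length).take (a.length + w.length - a.length) = w := by
    simp
  have remainder_eq :
      (a ++ w ++ b).take a.length ++ (a ++ w ++ b).drop (a.length + w.length) = a ++ b := by
    rw [← List.length_append, List.drop_left, List.append_assoc, List.take_left]
  have remove_factor := hL (a ++ w ++ b) a.length (a.length + w.length) (by omega)
    (by simp only [List.length_append]; omega) (by simp only [List.length_append]; omega)
  rw [factor_eq, remainder_eq] at remove_factor
  exact remove_factor hw

theorem IsStable.insertAt_mem_iff {L : Set (List 𝒜)} (hL : IsStable L) {w x : List 𝒜}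
    (hw : w ∈ L) (hw0 : w ≠ []) (hx : x ≠ []) (i : ℕ) : insertAt w x i ∈ L ↔ x ∈ L := by
  have split : x.take i ++ x.drop i = x := x.take_append_drop i
  rw [insertAt, hL.append_append_mem_iff hw hw0 (split.symm ▸ hx), split]

end InsertAt

section InsertionSum

open Finset

variable {M : Type*} [AddCommMonoid M]

theorem sum_range_eq_sum_left_add_block_add_right (F : ℕ → M) {i n : ℕ} (hi : i ≤ n) (m : ℕ) :
    ∑ j ∈ range (n + m + 1), F j =
      ∑ j ∈ range i, F j + ∑ k ∈ range (m + 1), F (i + k) +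
        ∑ j ∈ Ico (i + 1) (n + 1), F (j + m) := by
  calc ∑ j ∈ range (n + m + 1), F j
      = ∑ j ∈ range (i + (m + 1)), F j + ∑ j ∈ Ico (i + (m + 1)) (n + m + 1), F j :=
        (sum_range_add_sum_Ico F (by omega)).symm
    _ = _ := by
        rw [sum_range_add, sum_Ico_add' F, add_right_comm i 1 m, add_right_comm n 1 m, add_assoc i]

variable {𝒜 : Type*}

/-- The sum of `φ` over all insertions of the word `w` into `x`. For `φ = wv R` this is the
operation `w ∘ x` without the restriction to `w ∈ L`. -/
def insertionSum (φ : List 𝒜 → M) (w x : List 𝒜) : M :=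
  ∑ i ∈ range (x.length + 1), φ (insertAt w x i)

/-- The sum of `φ` over all ways of inserting `f` and `g` at two distinct positions `i < j` of `h`,
with `f` to the left of `g`. -/
def separatedInsertionSum (φ : List 𝒜 → M) (f g h : List 𝒜) : M :=
  ∑ j ∈ range (h.length + 1), ∑ i ∈ range j, φ (insertAt f (insertAt g h j) i)

theorem separatedInsertionSum_eq_sum_right (φ : List 𝒜 → M) (f g h : List 𝒜) :
    separatedInsertionSum φ g f h =
      ∑ i ∈ range (h.length + 1), ∑ j ∈ Ico (i + 1) (h.length + 1),
        φ (insertAt f (insertAt g h i) (j + g.length)) := by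
  calc separatedInsertionSum φ g f h
      = ∑ i ∈ range (h.length + 1), ∑ j ∈ Ico (i + 1) (h.length + 1),
          φ (insertAt g (insertAt f h j) i) := by
        simp only [separatedInsertionSum, range_eq_Ico]
        exact (sum_Ico_Ico_comm' 0 (h.length + 1) fun i j ↦ φ (insertAt g (insertAt f h j) i)).symm
    _ = _ := by
        refine sum_congr rfl fun i _ ↦ sum_congr rfl fun j hj ↦ ?_
        have ⟨i_lt_j, j_lt⟩ := mem_Ico.1 hj
        rw [insertAt_insertAt_comm f g (by omega) (by omega)]

theorem insertionSum_insertionSum (φ : List 𝒜 → M) (f g h : List 𝒜) :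
    insertionSum (insertionSum φ f) g h =
      insertionSum (fun u ↦ insertionSum φ u h) f g +
        (separatedInsertionSum φ f g h + separatedInsertionSum φ g f h) := by
  have nested : insertionSum (fun u ↦ insertionSum φ u h) f g =
      ∑ i ∈ range (h.length + 1), ∑ k ∈ range (g.length + 1),
        φ (insertAt f (insertAt g h i) (i + k)) := by
    simp only [insertionSum]
    rw [sum_comm]
    refine sum_congr rfl fun i hi ↦ sum_congr rfl fun k hk ↦ ?_
    rw [insertAt_insertAt_add f (mem_range_succ_iff.1 hi) (mem_range_succ_iff.1 hk)]
  rw [nested, separatedInsertionSum_eq_sum_right φ f g, separatedInsertionSum, ← sum_add_distrib,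
    ← sum_add_distrib]
  refine sum_congr rfl fun i hi ↦ ?_
  rw [insertionSum, length_insertAt,
    sum_range_eq_sum_left_add_block_add_right _ (mem_range_succ_iff.1 hi)]
  rw [add_left_comm, add_assoc]

end InsertionSum

section InsertionProduct

variable {R 𝒜 : Type*} [CommRing R]

theorem basisSingleOne_eq_wv (w : {w : List 𝒜 // w ≠ []}) :
    (Finsupp.basisSingleOne w : WordModule R 𝒜) = wv R w.1 := by
  rw [wv, dif_neg w.2, Finsupp.coe_basisSingleOne]

/-- The bilinear operation `circ` is the operation `∘_L`: insertion at all positions for words of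
`L`, and zero for words outside `L`. -/
structure IsInsertionProduct (L : Set (List 𝒜))
    (circ : WordModule R 𝒜 →ₗ[R] WordModule R 𝒜 →ₗ[R] WordModule R 𝒜) : Prop where
  apply_apply_of_notMem : ∀ w x : List 𝒜, w ≠ [] → x ≠ [] → w ∉ L → circ (wv R w) (wv R x) = 0
  apply_apply_of_mem : ∀ w x : List 𝒜, w ≠ [] → x ≠ [] → w ∈ L →
    circ (wv R w) (wv R x) = insertionSum (wv R) w x

namespace IsInsertionProduct

variable {L : Set (List 𝒜)} {circ : WordModule R 𝒜 →ₗ[R] WordModule R 𝒜 →ₗ[R] WordModule R 𝒜}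
  {f g h : List 𝒜}

theorem apply_of_notMem (hcirc : IsInsertionProduct L circ) (hf : f ≠ []) (hfL : f ∉ L) :
    circ (wv R f) = 0 := by
  refine Finsupp.basisSingleOne.ext fun x ↦ ?_
  rw [basisSingleOne_eq_wv]
  exact hcirc.apply_apply_of_notMem f x hf x.2 hfL

theorem apply_product_of_notMem_right (hcirc : IsInsertionProduct L circ) (hL : IsStable L)
    (hf : f ≠ []) (hg : g ≠ []) (hgL : g ∉ L) : circ (circ (wv R f) (wv R g)) = 0 := by
  by_cases hfL : f ∈ L
  · rw [hcirc.apply_apply_of_mem f g hf hg hfL, insertionSum, map_sum]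
    refine Finset.sum_eq_zero fun i _ ↦ hcirc.apply_of_notMem (insertAt_ne_nil hf g i) ?_
    rwa [hL.insertAt_mem_iff hfL hf hg]
  · rw [hcirc.apply_of_notMem hf hfL, LinearMap.zero_apply, map_zero]

theorem associatorMap_of_notMem_left (hcirc : IsInsertionProduct L circ) (hf : f ≠ [])
    (hfL : f ∉ L) : associatorMap circ (wv R f) = 0 := by
  refine LinearMap.ext₂ fun v z ↦ ?_
  simp only [associatorMap_apply, hcirc.apply_of_notMem hf hfL, LinearMap.zero_apply, map_zero,
    sub_zero]

theorem associatorMap_of_notMem_right (hcirc : IsInsertionProduct L circ) (hL : IsStable L)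
    (hf : f ≠ []) (hg : g ≠ []) (hgL : g ∉ L) : associatorMap circ (wv R f) (wv R g) = 0 := by
  refine LinearMap.ext fun z ↦ ?_
  simp only [associatorMap_apply, hcirc.apply_of_notMem hg hgL,
    hcirc.apply_product_of_notMem_right hL hf hg hgL, LinearMap.zero_apply, map_zero, sub_zero]

theorem apply_insertionSum (hcirc : IsInsertionProduct L circ) (hf : f ≠ []) (hfL : f ∈ L)
    (hg : g ≠ []) : circ (wv R f) (insertionSum (wv R) g h) =
      insertionSum (insertionSum (wv R) f) g h := by
  rw [insertionSum, map_sum]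
  exact Finset.sum_congr rfl fun i _ ↦
    hcirc.apply_apply_of_mem f _ hf (insertAt_ne_nil hg h i) hfL

theorem insertionSum_apply (hcirc : IsInsertionProduct L circ) (hL : IsStable L) (hf : f ≠ [])
    (hfL : f ∈ L) (hg : g ≠ []) (hgL : g ∈ L) (hh : h ≠ []) :
    circ (insertionSum (wv R) f g) (wv R h) =
      insertionSum (fun u ↦ insertionSum (wv R) u h) f g := by
  rw [insertionSum, map_sum, LinearMap.sum_apply]
  exact Finset.sum_congr rfl fun k _ ↦ hcirc.apply_apply_of_mem _ h (insertAt_ne_nil hf g k) hh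
    ((hL.insertAt_mem_iff hfL hf hg k).2 hgL)

theorem associatorMap_of_mem (hcirc : IsInsertionProduct L circ) (hL : IsStable L) (hf : f ≠ [])
    (hfL : f ∈ L) (hg : g ≠ []) (hgL : g ∈ L) (hh : h ≠ []) :
    associatorMap circ (wv R f) (wv R g) (wv R h) =
      separatedInsertionSum (wv R) f g h + separatedInsertionSum (wv R) g f h := by
  rw [associatorMap_apply, hcirc.apply_apply_of_mem g h hg hh hgL,
    hcirc.apply_apply_of_mem f g hf hg hfL, hcirc.apply_insertionSum hf hfL hg,
    hcirc.insertionSum_apply hL hf hfL hg hgL hh, insertionSum_insertionSum, add_sub_cancel_left]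

theorem associatorMap_wv_comm (hcirc : IsInsertionProduct L circ) (hL : IsStable L) (hf : f ≠ [])
    (hg : g ≠ []) (hh : h ≠ []) :
    associatorMap circ (wv R f) (wv R g) (wv R h) =
      associatorMap circ (wv R g) (wv R f) (wv R h) := by
  by_cases hfL : f ∈ L
  · by_cases hgL : g ∈ L
    · rw [hcirc.associatorMap_of_mem hL hf hfL hg hgL hh,
        hcirc.associatorMap_of_mem hL hg hgL hf hfL hh, add_comm]
    · simp only [hcirc.associatorMap_of_notMem_right hL hf hg hgL,
        hcirc.associatorMap_of_notMem_left hg hgL, LinearMap.zero_apply]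
  · simp only [hcirc.associatorMap_of_notMem_left hf hfL,
      hcirc.associatorMap_of_notMem_right hL hg hf hfL, LinearMap.zero_apply]

end IsInsertionProduct

end InsertionProduct

/-- the operation `w ∘_L x = Σ_{i=0}^{n} B_1…B_i A_1…A_m B_{i+1}…B_n`
(for `w ∈ L`, and `0` otherwise) is a left pre-Lie multiplication on the free module `V`
on nonempty words. -/
theorem stmt_17 {R 𝒜 : Type*} [CommRing R]
    (L : Set (List 𝒜)) (hL0 : ∀ w ∈ L, w ≠ []) (hL : IsStable L)
    (circ : WordModule R 𝒜 →ₗ[R] WordModule R 𝒜 →ₗ[R] WordModule R 𝒜)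
    (hcirc0 : ∀ w x : List 𝒜, w ≠ [] → x ≠ [] → w ∉ L →
      circ (wv R w) (wv R x) = 0)
    (hcirc1 : ∀ w x : List 𝒜, w ≠ [] → x ≠ [] → w ∈ L →
      circ (wv R w) (wv R x) =
        ∑ i ∈ Finset.range (x.length + 1), wv R (x.take i ++ w ++ x.drop i)) :
    ∀ f g h : WordModule R 𝒜,
      circ f (circ g h) - circ (circ f g) h =
        circ g (circ f h) - circ (circ g f) h := by
  have hprod : IsInsertionProduct L circ := ⟨hcirc0, hcirc1⟩
  refine associatorMap_comm_of_basis Finsupp.basisSingleOne fun f g h ↦ ?_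
  simp only [basisSingleOne_eq_wv]
  exact hprod.associatorMap_wv_comm hL f.2 g.2 h.2
end
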